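/- Assume the family Ψ_n satisfies property (P1) (the exchange relations). Then for each n ≥ 2, the scalar products Z_n(x₁,…,x_n) and Z̄_n^±(x₁,…,x_n) are symmetric functions of x₁,…,x_n: they are invariant under every permutation of x₁,…,x_n. -/

import Mathlib

noncomputable section

open Complex
open scoped BigOperators

/-- Jacobi theta function `ϑ₁(z|τ)` with nome `p = e^{iπτ}` (Whittaker–Watson convention). -/
def th1 (z τ : ℂ) : ℂ :=
  -Complex.I * ∑' n : ℤ, (-1 : ℂ) ^ n *
    Complex.exp ((Real.pi : ℂ) * Complex.I * τ * ((n : ℂ) + 1/2) ^ 2 + (2 * (n : ℂ) + 1) * Complex.I * z)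

/-- Jacobi theta function `ϑ₂(z|τ)`. -/
def th2 (z τ : ℂ) : ℂ :=
  ∑' n : ℤ,
    Complex.exp ((Real.pi : ℂ) * Complex.I * τ * ((n : ℂ) + 1/2) ^ 2 + (2 * (n : ℂ) + 1) * Complex.I * z)

/-- Jacobi theta function `ϑ₃(z|τ)`. -/
def th3 (z τ : ℂ) : ℂ :=
  ∑' n : ℤ, Complex.exp ((Real.pi : ℂ) * Complex.I * τ * (n : ℂ) ^ 2 + 2 * (n : ℂ) * Complex.I * z)

/-- Jacobi theta function `ϑ₄(z|τ)`. -/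
def th4 (z τ : ℂ) : ℂ :=
  ∑' n : ℤ, (-1 : ℂ) ^ n *
    Complex.exp ((Real.pi : ℂ) * Complex.I * τ * (n : ℂ) ^ 2 + 2 * (n : ℂ) * Complex.I * z)

/-- The crossing parameter `η = π/3`. -/
def ηc : ℂ := (Real.pi : ℂ) / 3

/-- The elliptic nome `p = e^{iπτ}`. -/
def pnome (τ : ℂ) : ℂ := Complex.exp ((Real.pi : ℂ) * Complex.I * τ)

/-- `ζ = (ϑ₁(η,p²)/ϑ₄(η,p²))²`. -/
def zet (τ : ℂ) : ℂ := (th1 ηc (2 * τ) / th4 ηc (2 * τ)) ^ 2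

/-- The nome `p` is real with `0 < p < 1`. -/
def preal (τ : ℂ) : Prop := (pnome τ).im = 0 ∧ 0 < (pnome τ).re ∧ (pnome τ).re < 1

/-- A tuple given by a list of prescribed entries, padded by zeros. -/
def padded {n : ℕ} (l : List ℂ) : Fin n → ℂ := fun j => l.getD (j : ℕ) 0

/-- Extension of a tuple by a list of prescribed further entries (padded by zeros). -/
def extL {m n : ℕ} (w : Fin m → ℂ) (l : List ℂ) : Fin n → ℂ :=
  fun j => if h : (j : ℕ) < m then w ⟨j, h⟩ else l.getD ((j : ℕ) - m) 0

/-- First `k` entries of a `2k`-tuple. -/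
def firstHalf {k : ℕ} (x : Fin (2 * k) → ℂ) : Fin k → ℂ :=
  fun i => x ⟨(i : ℕ), by have := i.2; omega⟩

/-- Last `k` entries of a `2k`-tuple. -/
def secondHalf {k : ℕ} (x : Fin (2 * k) → ℂ) : Fin k → ℂ :=
  fun i => x ⟨k + (i : ℕ), by have := i.2; omega⟩

/-- `𝕙(x,y) = ϑ₁(x−y+η)ϑ₁(x−y−η)ϑ₁(x+y+η)ϑ₁(x+y−η)`. -/
def hh (τ x y : ℂ) : ℂ :=
  th1 (x - y + ηc) τ * th1 (x - y - ηc) τ * th1 (x + y + ηc) τ * th1 (x + y - ηc) τ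

/-- `𝔻(x₁,…,x_k) = ∏_{i<j} ϑ₁(x_j−x_i)ϑ₁(x_j+x_i)`. -/
def vdTheta (τ : ℂ) {k : ℕ} (y : Fin k → ℂ) : ℂ :=
  ∏ i : Fin k, ∏ j : Fin k, if i < j then th1 (y j - y i) τ * th1 (y j + y i) τ else 1

/-- The elliptic Tsuchiya determinant `ℍ_{2k}(x₁,…,x_k; x_{k+1},…,x_{2k})`. -/
def tsuchiya (τ : ℂ) (k : ℕ) (x : Fin (2 * k) → ℂ) : ℂ :=
  (∏ i : Fin k, ∏ j : Fin k, hh τ (firstHalf x i) (secondHalf x j))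
    / (vdTheta τ (firstHalf x) * vdTheta τ (secondHalf x))
    * Matrix.det (Matrix.of fun i j : Fin k => (hh τ (firstHalf x i) (secondHalf x j))⁻¹)

/-- The expression defining the elliptic Tsuchiya determinant is well defined:
the Vandermonde-type denominators and the entries `𝕙(x_i,x_{j+k})` are nonzero. -/
def tsuDefined (τ : ℂ) (k : ℕ) (x : Fin (2 * k) → ℂ) : Prop :=
  (∀ i j : Fin k, i ≠ j →
    th1 (firstHalf x j - firstHalf x i) τ ≠ 0 ∧ th1 (firstHalf x j + firstHalf x i) τ ≠ 0) ∧
  (∀ i j : Fin k, i ≠ j →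
    th1 (secondHalf x j - secondHalf x i) τ ≠ 0 ∧ th1 (secondHalf x j + secondHalf x i) τ ≠ 0) ∧
  (∀ i j : Fin k, hh τ (firstHalf x i) (secondHalf x j) ≠ 0)

/-- `h(w,w') = 1 − (3+ζ²)ww' + (1−ζ²)ww'(w+w')`. -/
def hpol (ζ w w' : ℂ) : ℂ := 1 - (3 + ζ ^ 2) * w * w' + (1 - ζ ^ 2) * w * w' * (w + w')

/-- Vandermonde product `Δ(w₁,…,w_k) = ∏_{i<j}(w_j − w_i)`. -/
def vdm {k : ℕ} (y : Fin k → ℂ) : ℂ :=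
  ∏ i : Fin k, ∏ j : Fin k, if i < j then y j - y i else 1

/-- The determinant-ratio expression defining the polynomial `H_{2k}`. -/
def Hratio (ζ : ℂ) (k : ℕ) (w : Fin (2 * k) → ℂ) : ℂ :=
  (∏ i : Fin k, ∏ j : Fin k, hpol ζ (firstHalf w i) (secondHalf w j))
    / (vdm (firstHalf w) * vdm (secondHalf w))
    * Matrix.det (Matrix.of fun i j : Fin k => (hpol ζ (firstHalf w i) (secondHalf w j))⁻¹)

/-- The expression `Hratio` is well defined at `w`. -/
def HratioDefined (ζ : ℂ) (k : ℕ) (w : Fin (2 * k) → ℂ) : Prop :=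
  (∀ i j : Fin k, i ≠ j → firstHalf w i ≠ firstHalf w j) ∧
  (∀ i j : Fin k, i ≠ j → secondHalf w i ≠ secondHalf w j) ∧
  (∀ i j : Fin k, hpol ζ (firstHalf w i) (secondHalf w j) ≠ 0)

/-- `H` is the family of Rosengren–Zinn-Justin polynomials `H_{2k}` for parameter `ζ`:
for each `k`, `H k` is a polynomial function of the `2k` variables agreeing with the
determinant-ratio formula wherever the latter is defined, and `H 0 = 1`. -/
def IsHFamily (ζ : ℂ) (H : (k : ℕ) → (Fin (2 * k) → ℂ) → ℂ) : Prop :=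
  (∀ w, H 0 w = 1) ∧
  (∀ k : ℕ, ∃ P : MvPolynomial (Fin (2 * k)) ℂ, ∀ w, H k w = MvPolynomial.eval w P) ∧
  (∀ (k : ℕ) (w : Fin (2 * k) → ℂ), HratioDefined ζ k w → H k w = Hratio ζ k w)

/-- Vertex weight `a(u)`. -/
def av (τ u : ℂ) : ℂ := th4 (2*ηc) (2*τ) * th1 (u + 2*ηc) (2*τ) * th4 u (2*τ)
/-- Vertex weight `b(u)`. -/
def bv (τ u : ℂ) : ℂ := th4 (2*ηc) (2*τ) * th4 (u + 2*ηc) (2*τ) * th1 u (2*τ)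
/-- Vertex weight `c(u)`. -/
def cv (τ u : ℂ) : ℂ := th1 (2*ηc) (2*τ) * th4 (u + 2*ηc) (2*τ) * th4 u (2*τ)
/-- Vertex weight `d(u)`. -/
def dv (τ u : ℂ) : ℂ := th1 (2*ηc) (2*τ) * th1 (u + 2*ηc) (2*τ) * th1 u (2*τ)
/-- `r(u) = a(u) + b(u)`. -/
def rv (τ u : ℂ) : ℂ := av τ u + bv τ u

/-- Entries of the `R`-matrix of the eight-vertex model, in the basis `{↑↑,↑↓,↓↑,↓↓}`
identified with `Fin 2 × Fin 2` (`↑ = 0`, `↓ = 1`). -/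
def Rent (τ u : ℂ) (p q : Fin 2 × Fin 2) : ℂ :=
  if p = q then (if p.1 = p.2 then av τ u else bv τ u)
  else if q = (p.2, p.1) then cv τ u
  else if p.1 = p.2 ∧ q.1 = q.2 then dv τ u
  else 0

/-- Entries of `Ř(u) = 𝒫 R(u)`. -/
def Rcheckent (τ u : ℂ) (p q : Fin 2 × Fin 2) : ℂ := Rent τ u (p.2, p.1) q

/-- The boundary vector `χ(x) ∈ ℂ²⊗ℂ²`. -/
def chiV (τ lam x : ℂ) : Fin 2 × Fin 2 → ℂ := fun p =>
  if p = ((0 : Fin 2), (1 : Fin 2)) then th1 (x + lam) (2*τ) * th4 (x - lam - 2*ηc) (2*τ)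
  else if p = ((1 : Fin 2), (0 : Fin 2)) then th1 (x - lam - 2*ηc) (2*τ) * th4 (x + lam) (2*τ)
  else 0

/-- The boundary vector `χ̄(x) ∈ ℂ²⊗ℂ²`. -/
def chibarV (τ lam x : ℂ) : Fin 2 × Fin 2 → ℂ := fun p =>
  if p = ((0 : Fin 2), (0 : Fin 2)) then th1 (x + lam) (2*τ) * th1 (x - lam - 2*ηc) (2*τ)
  else if p = ((1 : Fin 2), (1 : Fin 2)) then th4 (x - lam - 2*ηc) (2*τ) * th4 (x + lam) (2*τ)
  else 0

/-- A family `Ψ_n(u₁,…,u_{2n+1}) ∈ (ℂ²)^{⊗(2n+1)}`, represented by its components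
with respect to spin configurations `α : Fin (2n+1) → Fin 2` (`↑ = 0`, `↓ = 1`). -/
abbrev PsiFam := (n : ℕ) → (Fin (2 * n + 1) → ℂ) → (Fin (2 * n + 1) → Fin 2) → ℂ

/-- The action of `Ř(u)` on tensor factors `i`, `j` of `(ℂ²)^{⊗L}`. -/
def applyRc (τ u : ℂ) {L : ℕ} (i j : Fin L) (ψ : (Fin L → Fin 2) → ℂ) :
    (Fin L → Fin 2) → ℂ := fun α =>
  ∑ s : Fin 2, ∑ t : Fin 2,
    Rcheckent τ u (α i, α j) (s, t) * ψ (Function.update (Function.update α i s) j t)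

/-- Spin flip. -/
def flipS : Fin 2 → Fin 2 := fun s => if s = 0 then 1 else 0

/-- Components of the singlet `s = ↑↓ − ↓↑`. -/
def singletC : Fin 2 → Fin 2 → ℂ := fun s t =>
  if s = 0 ∧ t = 1 then 1 else if s = 1 ∧ t = 0 then -1 else 0

/-- Delete the entries at positions `i`, `i+1` from a tuple. -/
def delTwo {α : Type*} {n : ℕ} (i : ℕ) (u : Fin (2 * (n + 1) + 1) → α) : Fin (2 * n + 1) → α :=
  fun j => if _h : (j : ℕ) < i then u ⟨j, by have := j.2; omega⟩
           else u ⟨(j : ℕ) + 2, by have := j.2; omega⟩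

/-- The components of `Ψ_n` are entire functions of each `u_i`. -/
def PsiEntire (Ψ : PsiFam) : Prop :=
  ∀ (n : ℕ) (u : Fin (2*n+1) → ℂ) (i : Fin (2*n+1)) (α : Fin (2*n+1) → Fin 2),
    Differentiable ℂ fun z => Ψ n (Function.update u i z) α

/-- (P1): the exchange relations. -/
def PsiP1 (τ : ℂ) (Ψ : PsiFam) : Prop :=
  ∀ (n : ℕ) (u : Fin (2*n+1) → ℂ) (i j : Fin (2*n+1)), (j : ℕ) = (i : ℕ) + 1 →
    applyRc τ (u j - u i) i j (Ψ n u)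
      = fun α => rv τ (u j - u i) * Ψ n (fun l => u (Equiv.swap i j l)) α

/-- (P2): local spin flips. -/
def PsiP2 (τ : ℂ) (Ψ : PsiFam) : Prop :=
  ∀ (n : ℕ) (u : Fin (2*n+1) → ℂ) (i : Fin (2*n+1)) (α : Fin (2*n+1) → Fin 2),
    Ψ n u (Function.update α i (flipS (α i)))
      = (-(pnome τ)) ^ n * Complex.exp (-Complex.I * ∑ j, (u j - u i))
        * Ψ n (Function.update u i (u i + Real.pi * τ)) α

/-- (P3): quasi-periodicity of `Ψ_n` in each `u_i`. -/
def PsiP3 (τ : ℂ) (Ψ : PsiFam) : Prop :=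
  ∀ (n : ℕ) (u : Fin (2*n+1) → ℂ) (i : Fin (2*n+1)),
    (Ψ n (Function.update u i (u i + Real.pi))
      = fun α => (∏ j ∈ Finset.univ.erase i, (if α j = 0 then (1:ℂ) else -1)) * Ψ n u α) ∧
    (Ψ n (Function.update u i (u i + 2 * Real.pi * τ))
      = fun α => (pnome τ ^ (4*n))⁻¹ *
          Complex.exp (-2 * Complex.I * ∑ j, (u i - u j)) * Ψ n u α)

/-- (P4): the wheel condition. -/
def PsiP4 (Ψ : PsiFam) : Prop :=
  ∀ (n : ℕ) (u : Fin (2*n+1) → ℂ),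
    (∃ i j k : Fin (2*n+1), i < j ∧ j < k ∧ u j = u i + 2*ηc ∧ u k = u i + 4*ηc) →
    Ψ n u = 0

/-- (P5): the reduction relations. -/
def PsiP5 (τ : ℂ) (Ψ : PsiFam) : Prop :=
  ∀ (n : ℕ) (u : Fin (2*(n+1)+1) → ℂ) (i : ℕ) (hi : i + 1 < 2*(n+1)+1),
    u ⟨i+1, hi⟩ = u ⟨i, by omega⟩ + 2*ηc →
    Ψ (n+1) u = fun α =>
      (∏ j ∈ (Finset.univ.erase (⟨i, by omega⟩ : Fin (2*(n+1)+1))).erase ⟨i+1, hi⟩,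
          th1 (u ⟨i, by omega⟩ - u j - 2*ηc) τ)
        * singletC (α ⟨i, by omega⟩) (α ⟨i+1, hi⟩)
        * Ψ n (delTwo i u) (delTwo i α)

/-- (P6): `Ψ₀ = ↑ + ↓`. -/
def PsiP6 (Ψ : PsiFam) : Prop := ∀ u α, Ψ 0 u α = 1

/-- The inhomogeneity parameters `(x₁,−x₁,…,x_n,−x_n,0)`. -/
def interleave {n : ℕ} (x : Fin n → ℂ) : Fin (2*n+1) → ℂ := fun j =>
  if h : (j : ℕ) < 2*n then
    (if (j : ℕ) % 2 = 0 then x ⟨(j:ℕ)/2, by omega⟩ else -x ⟨(j:ℕ)/2, by omega⟩)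
  else 0

/-- Components of `χ(x)`. -/
def chiC (τ lam x : ℂ) (s t : Fin 2) : ℂ :=
  if s = 0 ∧ t = 1 then th1 (x + lam) (2*τ) * th4 (x - lam - 2*ηc) (2*τ)
  else if s = 1 ∧ t = 0 then th1 (x - lam - 2*ηc) (2*τ) * th4 (x + lam) (2*τ)
  else 0

/-- Components of `χ̄(x)`. -/
def chibarC (τ lam x : ℂ) (s t : Fin 2) : ℂ :=
  if s = 0 ∧ t = 0 then th1 (x + lam) (2*τ) * th1 (x - lam - 2*ηc) (2*τ)
  else if s = 1 ∧ t = 1 then th4 (x - lam - 2*ηc) (2*τ) * th4 (x + lam) (2*τ)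
  else 0

/-- The scalar product `Z_n(x₁,…,x_n) = ⟨ξ_n(x₁,…,x_n), Ψ_n(x₁,−x₁,…,x_n,−x_n,0)⟩`. -/
def Zfun (τ lam : ℂ) (Ψ : PsiFam) (n : ℕ) (x : Fin n → ℂ) : ℂ :=
  ∑ α : Fin (2*n+1) → Fin 2,
    (∏ m : Fin n, chiC τ lam (x m)
        (α ⟨2*(m:ℕ), by have := m.2; omega⟩) (α ⟨2*(m:ℕ)+1, by have := m.2; omega⟩))
      * (if α ⟨2*n, by omega⟩ = 0 then (1:ℂ) else 0)
      * Ψ n (interleave x) α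

/-- The scalar product `Z̄_n^±(x₁,…,x_n)`, with `ε = ±1`. -/
def Zbarfun (τ lam ε : ℂ) (Ψ : PsiFam) (n : ℕ) (x : Fin n → ℂ) : ℂ :=
  ∑ α : Fin (2*n+1) → Fin 2,
    (∏ m : Fin n, chibarC τ lam (x m)
        (α ⟨2*(m:ℕ), by have := m.2; omega⟩) (α ⟨2*(m:ℕ)+1, by have := m.2; omega⟩))
      * (if α ⟨2*n, by omega⟩ = 0 then (1:ℂ) else ε)
      * Ψ n (interleave x) α

/-- The normalisation constant `𝒩_n`. -/
def Ncoef (τ : ℂ) (n : ℕ) : ℂ :=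
  (-1 : ℂ) ^ ((n+1)/2) * (th1 ηc τ ^ (n^2))⁻¹ * (th4 0 (2*τ) / th4 ηc (2*τ)) ^ (n*(n+1)/2)

/-- The vector `ψ_n = 𝒩_n Ψ_n(0,…,0)`. -/
def psiH (τ : ℂ) (Ψ : PsiFam) (n : ℕ) (α : Fin (2*n+1) → Fin 2) : ℂ :=
  Ncoef τ n * Ψ n (fun _ => 0) α

/-- The scalar product `S_n(μ) = ((⟨↑↓| + μ⟨↓↑|)^{⊗n} ⊗ ⟨↑|) ψ_n`. -/
def Sfun (τ : ℂ) (Ψ : PsiFam) (n : ℕ) (μ : ℂ) : ℂ :=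
  ∑ α : Fin (2*n+1) → Fin 2,
    (∏ m : Fin n,
      (if α ⟨2*(m:ℕ), by have := m.2; omega⟩ = 0 ∧ α ⟨2*(m:ℕ)+1, by have := m.2; omega⟩ = 1
        then (1:ℂ)
       else if α ⟨2*(m:ℕ), by have := m.2; omega⟩ = 1 ∧ α ⟨2*(m:ℕ)+1, by have := m.2; omega⟩ = 0
        then μ
       else 0))
      * (if α ⟨2*n, by omega⟩ = 0 then (1:ℂ) else 0) * psiH τ Ψ n α

/-- The scalar product `S̄_n^±(ν) = ((⟨↑↑| + ν⟨↓↓|)^{⊗n} ⊗ (⟨↑| ± ⟨↓|)) ψ_n`, with `ε = ±1`. -/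
def Sbarfun (τ ε : ℂ) (Ψ : PsiFam) (n : ℕ) (ν : ℂ) : ℂ :=
  ∑ α : Fin (2*n+1) → Fin 2,
    (∏ m : Fin n,
      (if α ⟨2*(m:ℕ), by have := m.2; omega⟩ = 0 ∧ α ⟨2*(m:ℕ)+1, by have := m.2; omega⟩ = 0
        then (1:ℂ)
       else if α ⟨2*(m:ℕ), by have := m.2; omega⟩ = 1 ∧ α ⟨2*(m:ℕ)+1, by have := m.2; omega⟩ = 1
        then ν
       else 0))
      * (if α ⟨2*n, by omega⟩ = 0 then (1:ℂ) else ε) * psiH τ Ψ n α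

/-- The alternating spin configuration `↑↓↑↓⋯↑`. -/
def altConf {L : ℕ} : Fin L → Fin 2 := fun j => if (j : ℕ) % 2 = 0 then 0 else 1

/-- The fully polarised spin configuration `↓⋯↓`. -/
def downConf {L : ℕ} : Fin L → Fin 2 := fun _ => 1

/-- The spin configuration `↑⋯↑↓` with a single `↓` at the last site. -/
def lastDownConf {n : ℕ} : Fin (2*n+1) → Fin 2 := fun j => if (j : ℕ) = 2*n then 1 else 0

/-- `J₂ = −1/2`. -/
def J2c : ℂ := -(1/2)
/-- `J₃ = 1/(1+ζ)`. -/
def J3c (ζ : ℂ) : ℂ := 1/(1+ζ)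
/-- `J₄ = 1/(1−ζ)`. -/
def J4c (ζ : ℂ) : ℂ := 1/(1-ζ)
/-- `μ̄ = (μ−1)²/((ζ²−1)μ)`. -/
def mubar (ζ μ : ℂ) : ℂ := (μ - 1)^2 / ((ζ^2 - 1)*μ)
/-- `ν̄ = (ν−ζ)(νζ−1)/((ζ²−1)ν)`. -/
def nubar (ζ ν : ℂ) : ℂ := (ν - ζ)*(ν*ζ - 1) / ((ζ^2 - 1)*ν)

/-- The elliptic function `w(x)`. -/
def wfun (τ x : ℂ) : ℂ :=
  th4 ηc (2*τ) / th4 0 (2*τ) * th1 x τ ^ 2 / (th1 (x - ηc) τ * th1 (x + ηc) τ)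

/-- `β₂ = η + π/2`. -/
def β2c : ℂ := ηc + (Real.pi : ℂ)/2
/-- `β₃ = η + π/2 + πτ/2`. -/
def β3c (τ : ℂ) : ℂ := ηc + (Real.pi : ℂ)/2 + (Real.pi : ℂ)*τ/2
/-- `β₄ = η + πτ/2`. -/
def β4c (τ : ℂ) : ℂ := ηc + (Real.pi : ℂ)*τ/2

/-- `f` is an (even) theta function of degree `m`, nome `p = e^{iπτ}` and norm `0`
with respect to each of its variables. -/
def ThetaLike (τ : ℂ) (m : ℕ) {n : ℕ} (X : (Fin n → ℂ) → ℂ) : Prop :=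
  ∀ (x : Fin n → ℂ) (i : Fin n),
    Differentiable ℂ (fun z => X (Function.update x i z)) ∧
    (∀ z, X (Function.update x i (z + Real.pi)) = X (Function.update x i z)) ∧
    (∀ z, X (Function.update x i (z + Real.pi * τ))
        = ((-(pnome τ)) ^ m)⁻¹ * Complex.exp (-2 * Complex.I * ((m : ℂ) * z))
            * X (Function.update x i z)) ∧
    (∀ z, X (Function.update x i (-z)) = X (Function.update x i z))

/-- The reciprocal `q`-Pochhammer symbol `1 / ((1 - Q)⋯(1 - Q ^ m))`, zero for negative `m`. -/
def qPochInv (Q : ℂ) (m : ℤ) : ℂ :=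
  if m < 0 then 0 else ∏ i ∈ Finset.range m.toNat, (1 - Q ^ (i + 1))⁻¹

lemma one_sub_pow_ne_zero {Q : ℂ} (hQ : ‖Q‖ < 1) (i : ℕ) : 1 - Q ^ (i + 1) ≠ 0 := by
  intro h
  have h2 : ‖Q‖ ^ (i + 1) = 1 := by
    rw [← norm_pow, ← sub_eq_zero.mp h, norm_one]
  exact (pow_lt_one₀ (norm_nonneg Q) hQ (Nat.succ_ne_zero i)).ne h2

lemma qPochInv_sub_one {Q : ℂ} (hQ : ‖Q‖ < 1) (m : ℤ) :
    qPochInv Q (m - 1) = (1 - Q ^ m) * qPochInv Q m := by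
  rcases lt_trichotomy m 0 with h | h | h
  · simp [qPochInv, h, show m - 1 < 0 by omega]
  · simp [qPochInv, h]
  · obtain ⟨k, rfl⟩ : ∃ k : ℕ, m = k + 1 := ⟨(m - 1).toNat, by omega⟩
    have h1 : ¬ ((k : ℤ) + 1 < 0) := by omega
    have h2 : ((k : ℤ) + 1).toNat = k + 1 := by omega
    simp only [qPochInv, add_sub_cancel_right, h1, h2, if_false, Finset.prod_range_succ,
      Int.toNat_natCast, show ¬ ((k : ℤ) < 0) by omega]
    have h3 := one_sub_pow_ne_zero hQ k
    have h4 : Q ^ ((k : ℤ) + 1) = Q ^ (k + 1) := by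
      rw [← zpow_natCast]; push_cast; rfl
    rw [h4]
    field_simp

/-- Cauchy's finite form of the Jacobi triple product identity. -/
lemma hasSum_finite_triple_product {q w : ℂ} (hq0 : q ≠ 0) (hq : ‖q‖ < 1) (hw : w ≠ 0) (N : ℕ) :
    HasSum (fun k : ℤ => (∏ i ∈ Finset.range (2 * N), (1 - (q ^ 2) ^ (i + 1))) *
        (qPochInv (q ^ 2) (N - k) * qPochInv (q ^ 2) (N + k)) * (q ^ (k * k) * w ^ k))
      (∏ n ∈ Finset.range N, ((1 + q ^ (2 * n + 1) * w) * (1 + q ^ (2 * n + 1) * w⁻¹))) := by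
  have hQ : ‖q ^ 2‖ < 1 := by
    rw [norm_pow]; exact pow_lt_one₀ (norm_nonneg q) hq two_ne_zero
  induction N with
  | zero =>
    convert hasSum_single (0 : ℤ) ?_ using 1
    · simp [qPochInv]
    · intro k hk
      rcases lt_or_gt_of_ne hk with h | h <;> simp [qPochInv, h]
  | succ N ih =>
    have e1 := ih.mul_left (1 + q ^ (4 * N + 2))
    have e2 := ((Equiv.subRight (1 : ℤ)).hasSum_iff.mpr ih).mul_left (q ^ (2 * N + 1) * w)
    have e3 := ((Equiv.addRight (1 : ℤ)).hasSum_iff.mpr ih).mul_left (q ^ (2 * N + 1) * w⁻¹)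
    convert! (e1.add e2).add e3 using 1
    · funext k
      simp only [Function.comp, Equiv.subRight_apply, Equiv.coe_addRight]
      rw [show 2 * (N + 1) = 2 * N + 1 + 1 by ring, Finset.prod_range_succ, Finset.prod_range_succ]
      generalize (∏ i ∈ Finset.range (2 * N), (1 - (q ^ 2) ^ (i + 1))) = C
      have a1 := qPochInv_sub_one hQ ((N : ℤ) + 1 - k)
      have a2 := qPochInv_sub_one hQ ((N : ℤ) - k)
      have b1 := qPochInv_sub_one hQ ((N : ℤ) + 1 + k)
      have b2 := qPochInv_sub_one hQ ((N : ℤ) + k)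
      rw [show (N : ℤ) + 1 - k - 1 = N - k by ring] at a1
      rw [show (N : ℤ) + 1 + k - 1 = N + k by ring] at b1
      rw [show (N : ℤ) - (k - 1) = N + 1 - k by ring, show (N : ℤ) + (k - 1) = N + k - 1 by ring,
        show (N : ℤ) - (k + 1) = N - k - 1 by ring, show (N : ℤ) + (k + 1) = N + 1 + k by ring,
        a2, b2, a1, b1]
      push_cast
      generalize qPochInv (q ^ 2) ((N : ℤ) + 1 - k) = I'
      generalize qPochInv (q ^ 2) ((N : ℤ) + 1 + k) = J'
      have z1 : (q ^ 2) ^ ((N : ℤ) + 1 - k) = q ^ 2 * q ^ (2 * N) * (q ^ k)⁻¹ * (q ^ k)⁻¹ := by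
        rw [zpow_sub₀ (by positivity), zpow_add₀ (by positivity), pow_mul q 2 N]
        rw [zpow_natCast, zpow_one, ← zpow_natCast q 2, ← zpow_mul, mul_comm _ k, zpow_mul]
        norm_cast
        field_simp
      have z2 : (q ^ 2) ^ ((N : ℤ) - k) = q ^ (2 * N) * (q ^ k)⁻¹ * (q ^ k)⁻¹ := by
        rw [zpow_sub₀ (by positivity), pow_mul q 2 N]
        rw [zpow_natCast, ← zpow_natCast q 2, ← zpow_mul, mul_comm _ k, zpow_mul]
        norm_cast
        field_simp
      have z3 : (q ^ 2) ^ ((N : ℤ) + 1 + k) = q ^ 2 * q ^ (2 * N) * q ^ k * q ^ k := by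
        rw [zpow_add₀ (by positivity), zpow_add₀ (by positivity), pow_mul q 2 N]
        rw [zpow_natCast, zpow_one, ← zpow_natCast q 2, ← zpow_mul, mul_comm _ k, zpow_mul]
        norm_cast
        ring
      have z4 : (q ^ 2) ^ ((N : ℤ) + k) = q ^ (2 * N) * q ^ k * q ^ k := by
        rw [zpow_add₀ (by positivity), pow_mul q 2 N]
        rw [zpow_natCast, ← zpow_natCast q 2, ← zpow_mul, mul_comm _ k, zpow_mul]
        norm_cast
        ring
      have z5 : q ^ ((k - 1) * (k - 1)) = q ^ (k * k) * (q ^ k)⁻¹ * (q ^ k)⁻¹ * q := by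
        rw [show (k - 1) * (k - 1) = k * k - k - k + 1 by ring, zpow_add₀ hq0, zpow_sub₀ hq0,
          zpow_sub₀ hq0, zpow_one]
        field_simp
      have z6 : q ^ ((k + 1) * (k + 1)) = q ^ (k * k) * q ^ k * q ^ k * q := by
        rw [show (k + 1) * (k + 1) = k * k + k + k + 1 by ring, zpow_add₀ hq0, zpow_add₀ hq0,
          zpow_add₀ hq0, zpow_one]
      rw [z1, z2, z3, z4, z5, z6, zpow_sub_one₀ hw, zpow_add_one₀ hw]
      have hk : q ^ k ≠ 0 := zpow_ne_zero k hq0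
      generalize q ^ k = κ at *
      generalize q ^ (k * k) = κ2 at *
      generalize w ^ k = W at *
      have p1 : q ^ (4 * N + 2) = (q ^ (2 * N)) ^ 2 * q ^ 2 := by ring
      have p2 : (q ^ 2) ^ (2 * N + 1) = (q ^ (2 * N)) ^ 2 * q ^ 2 := by ring
      have p3 : (q ^ 2) ^ (2 * N + 1 + 1) = (q ^ (2 * N)) ^ 2 * q ^ 4 := by ring
      have p4 : q ^ (2 * N + 1) = q ^ (2 * N) * q := by ring
      rw [p1, p2, p3, p4]
      generalize q ^ (2 * N) = A at *
      field_simp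
      ring
    · rw [Finset.prod_range_succ]
      field_simp
      ring_nf

lemma tendsto_prod_one_add_ne_zero {f : ℕ → ℂ} (hf : ∀ i, 1 + f i ≠ 0) (hu : Summable (‖f ·‖)) :
    ∃ L : ℂ, L ≠ 0 ∧
      Filter.Tendsto (fun N => ∏ n ∈ Finset.range N, (1 + f n)) Filter.atTop (nhds L) :=
  ⟨_, tprod_one_add_ne_zero_of_summable hf hu,
    (multipliable_one_add_of_summable hu).hasProd.tendsto_prod_nat⟩

/-- Zeros of `∑ q ^ (k ^ 2) w ^ k` can only occur at `w = -q ^ (odd)`. -/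
lemma exists_zero_factor_of_tsum_eq_zero {q w : ℂ} (hq0 : q ≠ 0) (hq : ‖q‖ < 1) (hw : w ≠ 0)
    (hs : Summable fun k : ℤ => q ^ (k * k) * w ^ k)
    (h0 : ∑' k : ℤ, q ^ (k * k) * w ^ k = 0) :
    ∃ n : ℤ, q ^ (2 * n + 1) * w = -1 := by
  by_contra! hne
  have hQ : ‖q ^ 2‖ < 1 := by
    rw [norm_pow]; exact pow_lt_one₀ (norm_nonneg q) hq two_ne_zero
  have hodd : Summable fun n : ℕ => ‖q ^ (2 * n + 1)‖ := by
    have := (summable_geometric_of_lt_one (norm_nonneg _) hQ).mul_right ‖q‖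
    refine this.congr fun n => ?_
    rw [← norm_pow, ← norm_mul]
    ring_nf
  obtain ⟨A, hA0, hA⟩ := tendsto_prod_one_add_ne_zero (f := fun n => q ^ (2 * n + 1) * w)
    (fun n h => hne n (by
      rw [← eq_neg_iff_add_eq_zero.mpr (by rwa [add_comm] at h)]
      congr 1))
    (by simpa only [norm_mul] using hodd.mul_right ‖w‖)
  obtain ⟨B, hB0, hB⟩ := tendsto_prod_one_add_ne_zero (f := fun n => q ^ (2 * n + 1) * w⁻¹)
    (fun n h => hne (-n - 1) (by
      have h1 : q ^ (2 * n + 1) * w⁻¹ = -1 := eq_neg_iff_add_eq_zero.mpr (by rwa [add_comm] at h)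
      have h2 : q ^ (2 * n + 1) = -w := by field_simp at h1; exact h1
      have h3 : q ^ (2 * (-(n : ℤ) - 1) + 1) = (q ^ (2 * n + 1))⁻¹ := by
        rw [show 2 * (-(n : ℤ) - 1) + 1 = -((2 * n + 1 : ℕ) : ℤ) by push_cast; ring, zpow_neg,
          zpow_natCast]
      rw [h3, h2, inv_neg]
      field_simp))
    (by simpa only [norm_mul] using hodd.mul_right ‖w⁻¹‖)
  obtain ⟨L, hL0, hL⟩ := tendsto_prod_one_add_ne_zero (f := fun n => -(q ^ 2) ^ (n + 1))
    (fun n => by simpa [sub_eq_add_neg] using one_sub_pow_ne_zero hQ n)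
    (by
      simp only [norm_neg, norm_pow (q ^ 2)]
      exact (summable_nat_add_iff 1).mpr (summable_geometric_of_lt_one (norm_nonneg _) hQ))
  simp only [← sub_eq_add_neg] at hL
  have hinv : Filter.Tendsto (fun m : ℕ => ∏ i ∈ Finset.range m, (1 - (q ^ 2) ^ (i + 1))⁻¹)
      Filter.atTop (nhds L⁻¹) := by
    simpa only [Finset.prod_inv_distrib] using hL.inv₀ hL0
  obtain ⟨C₁, hC₁⟩ := hL.norm.bddAbove_range
  obtain ⟨C₂, hC₂⟩ := hinv.norm.bddAbove_range
  have hC₁' (N : ℕ) := hC₁ (Set.mem_range_self N)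
  have hC₂0 : 0 ≤ C₂ := (norm_nonneg _).trans (hC₂ (Set.mem_range_self 0))
  have hC₂' (m : ℤ) : ‖qPochInv (q ^ 2) m‖ ≤ C₂ := by
    unfold qPochInv
    split_ifs
    · simpa using hC₂0
    · exact hC₂ (Set.mem_range_self m.toNat)
  have hinv' : Filter.Tendsto (qPochInv (q ^ 2)) Filter.atTop (nhds L⁻¹) := by
    refine Filter.Tendsto.congr' ?_ (hinv.comp (Filter.tendsto_atTop.2 fun b =>
      (Filter.eventually_ge_atTop (b : ℤ)).mono fun m hm => show b ≤ m.toNat by omega))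
    filter_upwards [Filter.eventually_ge_atTop 0] with m hm
    simp [qPochInv, not_lt.mpr hm]
  have hlim := tendsto_tsum_of_dominated_convergence
    (f := fun (N : ℕ) (k : ℤ) => (∏ i ∈ Finset.range (2 * N), (1 - (q ^ 2) ^ (i + 1))) *
        (qPochInv (q ^ 2) (N - k) * qPochInv (q ^ 2) (N + k)) * (q ^ (k * k) * w ^ k))
    (g := fun k => L * (L⁻¹ * L⁻¹) * (q ^ (k * k) * w ^ k))
    (𝓕 := Filter.atTop) (bound := fun k => C₁ * (C₂ * C₂) * ‖q ^ (k * k) * w ^ k‖)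
    (hs.norm.mul_left _)
    (fun k => by
      refine Filter.Tendsto.mul_const _ (Filter.Tendsto.mul ?_ (Filter.Tendsto.mul ?_ ?_))
      · exact hL.comp (Filter.tendsto_id.const_mul_atTop' two_pos)
      · exact hinv'.comp (Filter.tendsto_atTop_add_const_right _ (-k) tendsto_natCast_atTop_atTop)
      · exact hinv'.comp (Filter.tendsto_atTop_add_const_right _ k tendsto_natCast_atTop_atTop))
    (Filter.Eventually.of_forall fun N k => by
      rw [norm_mul, norm_mul, norm_mul]
      gcongr
      · exact (norm_nonneg _).trans (hC₁' 0)
      · exact hC₁' _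
      · exact hC₂' _
      · exact hC₂' _)
  simp only [(hasSum_finite_triple_product hq0 hq hw _).tsum_eq, tsum_mul_left, h0, mul_zero,
    Finset.prod_mul_distrib] at hlim
  exact mul_ne_zero hA0 hB0 (tendsto_nhds_unique (hA.mul hB) hlim)

lemma neg_one_zpow_eq_exp (n : ℤ) : (-1 : ℂ) ^ n = exp (n * (Real.pi * I)) := by
  rw [exp_int_mul, exp_pi_mul_I]

lemma pi_ne_zero' : (Real.pi : ℂ) ≠ 0 := ofReal_ne_zero.mpr Real.pi_ne_zero

lemma th3_eq_jacobi (z τ : ℂ) : th3 z τ = jacobiTheta₂ (z / Real.pi) τ := by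
  have := pi_ne_zero'
  refine tsum_congr fun n => ?_
  rw [jacobiTheta₂_term]
  congr 1
  field_simp
  ring

lemma th4_eq_jacobi (z τ : ℂ) : th4 z τ = jacobiTheta₂ (z / Real.pi + 1 / 2) τ := by
  have := pi_ne_zero'
  refine tsum_congr fun n => ?_
  rw [jacobiTheta₂_term, neg_one_zpow_eq_exp, ← exp_add]
  congr 1
  field_simp
  ring

lemma th2_eq_jacobi (z τ : ℂ) :
    th2 z τ = exp (Real.pi * I * τ / 4 + I * z) * jacobiTheta₂ (z / Real.pi + τ / 2) τ := by
  have := pi_ne_zero'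
  rw [th2, jacobiTheta₂, ← tsum_mul_left]
  refine tsum_congr fun n => ?_
  rw [jacobiTheta₂_term, ← exp_add]
  congr 1
  field_simp
  ring

lemma th1_eq_jacobi (z τ : ℂ) :
    th1 z τ = -I * exp (Real.pi * I * τ / 4 + I * z) *
      jacobiTheta₂ (z / Real.pi + 1 / 2 + τ / 2) τ := by
  have := pi_ne_zero'
  rw [th1, mul_assoc (-I) (exp _)]
  congr 1
  rw [jacobiTheta₂, ← tsum_mul_left]
  refine tsum_congr fun n => ?_
  rw [jacobiTheta₂_term, neg_one_zpow_eq_exp, ← exp_add, ← exp_add]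
  congr 1
  field_simp
  ring

lemma differentiable_jacobiTheta₂_fst {τ : ℂ} (hτ : 0 < τ.im) :
    Differentiable ℂ fun z => jacobiTheta₂ z τ :=
  fun z => differentiableAt_jacobiTheta₂_fst z hτ

lemma differentiable_th1 {τ : ℂ} (hτ : 0 < τ.im) : Differentiable ℂ fun z => th1 z τ := by
  simp only [th1_eq_jacobi]
  exact (by fun_prop : Differentiable ℂ fun z => -I * exp (Real.pi * I * τ / 4 + I * z)).mul
    ((differentiable_jacobiTheta₂_fst hτ).comp
      (by fun_prop : Differentiable ℂ fun z : ℂ => z / Real.pi + 1 / 2 + τ / 2))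

lemma differentiable_th3 {τ : ℂ} (hτ : 0 < τ.im) : Differentiable ℂ fun z => th3 z τ := by
  simp only [th3_eq_jacobi]
  exact (differentiable_jacobiTheta₂_fst hτ).comp
    (by fun_prop : Differentiable ℂ fun z : ℂ => z / Real.pi)

lemma differentiable_th4 {τ : ℂ} (hτ : 0 < τ.im) : Differentiable ℂ fun z => th4 z τ := by
  simp only [th4_eq_jacobi]
  exact (differentiable_jacobiTheta₂_fst hτ).comp
    (by fun_prop : Differentiable ℂ fun z : ℂ => z / Real.pi + 1 / 2)

lemma th4_neg (z τ : ℂ) : th4 (-z) τ = th4 z τ := by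
  rw [th4_eq_jacobi, th4_eq_jacobi, ← jacobiTheta₂_neg_left, ← jacobiTheta₂_add_left]
  congr 1
  ring

lemma th1_neg (z τ : ℂ) : th1 (-z) τ = -th1 z τ := by
  have hpi := pi_ne_zero'
  have h := jacobiTheta₂_add_left' (-(z / Real.pi + 1 / 2 + τ / 2)) τ
  rw [jacobiTheta₂_neg_left, ← jacobiTheta₂_add_left] at h
  rw [th1_eq_jacobi, th1_eq_jacobi, show -z / (Real.pi : ℂ) + 1 / 2 + τ / 2 =
    -(z / Real.pi + 1 / 2 + τ / 2) + τ + 1 by ring, h]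
  have : exp (Real.pi * I * τ / 4 + I * -z) *
      exp (-Real.pi * I * (τ + 2 * -(z / Real.pi + 1 / 2 + τ / 2))) =
      -exp (Real.pi * I * τ / 4 + I * z) := by
    rw [← exp_add, ← neg_one_mul (exp (_ + _)), ← exp_pi_mul_I, ← exp_add]
    congr 1
    field_simp
    ring
  linear_combination (-I * jacobiTheta₂ (z / Real.pi + 1 / 2 + τ / 2) τ) * this

/-- Zeros of `jacobiTheta₂`, in multiplicative form. -/
lemma exists_of_jacobiTheta₂_eq_zero {z τ : ℂ} (hτ : 0 < τ.im) (h : jacobiTheta₂ z τ = 0) :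
    ∃ n : ℤ, exp (Real.pi * I * ((2 * n + 1) * τ + 2 * z + 1)) = 1 := by
  have key (k : ℤ) : exp (Real.pi * I * τ) ^ (k * k) * exp (2 * Real.pi * I * z) ^ k =
      jacobiTheta₂_term k z τ := by
    rw [← exp_int_mul, ← exp_int_mul, ← exp_add, jacobiTheta₂_term]
    congr 1
    push_cast
    ring
  have hq : ‖exp (Real.pi * I * τ)‖ < 1 := by
    rw [norm_exp]
    have : (Real.pi * I * τ).re = -(Real.pi * τ.im) := by simp
    rw [this, Real.exp_lt_one_iff]
    have := Real.pi_pos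
    nlinarith
  obtain ⟨n, hn⟩ := exists_zero_factor_of_tsum_eq_zero (exp_ne_zero _) hq
    (exp_ne_zero (2 * Real.pi * I * z))
    ((hasSum_jacobiTheta₂_term z hτ).summable.congr fun k => (key k).symm)
    (by rw [tsum_congr key]; exact h)
  refine ⟨n, ?_⟩
  rw [← exp_int_mul, ← exp_add] at hn
  have : exp (Real.pi * I) * exp (((2 * n + 1 : ℤ) : ℂ) * (Real.pi * I * τ) +
      2 * Real.pi * I * z) = 1 := by rw [hn, exp_pi_mul_I]; norm_num
  refine Eq.trans ?_ this
  rw [← exp_add]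
  congr 1
  push_cast
  ring

/-- The lattice `ℤ × ℤ` split by the parity of `m + n`. -/
def intPairParityEquiv : (ℤ × ℤ) ⊕ (ℤ × ℤ) ≃ ℤ × ℤ := Equiv.ofBijective
  (Sum.elim (fun p => (p.1 + p.2, p.1 - p.2)) (fun p => (p.1 + p.2 + 1, p.1 - p.2))) <| by
  constructor
  · rintro (⟨s, d⟩ | ⟨s, d⟩) (⟨s', d'⟩ | ⟨s', d'⟩) h <;>
      simp only [Sum.elim_inl, Sum.elim_inr, Prod.mk.injEq, Sum.inl.injEq, Sum.inr.injEq,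
        reduceCtorEq] at h ⊢ <;> omega
  · rintro ⟨m, n⟩
    rcases Int.even_or_odd' (m + n) with ⟨k, hk | hk⟩
    · exact ⟨.inl (k, k - n), by simp only [Sum.elim_inl, Prod.mk.injEq]; omega⟩
    · exact ⟨.inr (k, k - n), by simp only [Sum.elim_inr, Prod.mk.injEq]; omega⟩

lemma intPairParityEquiv_inl (p : ℤ × ℤ) :
    intPairParityEquiv (.inl p) = (p.1 + p.2, p.1 - p.2) := rfl

lemma intPairParityEquiv_inr (p : ℤ × ℤ) :
    intPairParityEquiv (.inr p) = (p.1 + p.2 + 1, p.1 - p.2) := rfl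

lemma HasSum.mul_prod {f g : ℤ → ℂ} {a b : ℂ} (hf : HasSum f a) (hg : HasSum g b) :
    HasSum (fun p : ℤ × ℤ => f p.1 * g p.2) (a * b) :=
  hf.mul hg (summable_mul_of_summable_norm hf.summable.norm hg.summable.norm)

lemma hasSum_jacobiTheta₂_mul (x y : ℂ) {τ : ℂ} (hτ : 0 < τ.im) :
    HasSum (fun p : ℤ × ℤ => jacobiTheta₂_term p.1 x τ * jacobiTheta₂_term p.2 y τ)
      (jacobiTheta₂ x τ * jacobiTheta₂ y τ) := by
  have hx := hasSum_jacobiTheta₂_term x hτ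
  have hy := hasSum_jacobiTheta₂_term y hτ
  have hxy := hx.mul_prod hy
  exact hxy

lemma jacobiTheta₂_mul (x y : ℂ) {τ : ℂ} (hτ : 0 < τ.im) :
    jacobiTheta₂ x τ * jacobiTheta₂ y τ =
      jacobiTheta₂ (x + y) (2 * τ) * jacobiTheta₂ (x - y) (2 * τ) +
      exp (Real.pi * I * (2 * x + τ)) *
        (jacobiTheta₂ (x + y + τ) (2 * τ) * jacobiTheta₂ (x - y + τ) (2 * τ)) := by
  have h2 : 0 < (2 * τ).im := by simpa using hτ
  have h := intPairParityEquiv.hasSum_iff.mpr (hasSum_jacobiTheta₂_mul x y hτ)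
  refine h.unique (HasSum.sum ?_ ?_)
  · convert! hasSum_jacobiTheta₂_mul (x + y) (x - y) h2 using 2 with p
    simp only [Function.comp, intPairParityEquiv_inl, jacobiTheta₂_term, ← exp_add]
    congr 1
    push_cast
    ring
  · convert! (hasSum_jacobiTheta₂_mul (x + y + τ) (x - y + τ) h2).mul_left
      (exp (Real.pi * I * (2 * x + τ))) using 2 with p
    simp only [Function.comp, intPairParityEquiv_inr, jacobiTheta₂_term, ← exp_add]
    congr 1
    push_cast
    ring

lemma th1_mul_th2 (x y : ℂ) {τ : ℂ} (hτ : 0 < τ.im) :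
    th1 x τ * th2 y τ = th1 (x + y) (2 * τ) * th4 (x - y) (2 * τ) +
      th4 (x + y) (2 * τ) * th1 (x - y) (2 * τ) := by
  have hpi := pi_ne_zero'
  simp only [th1_eq_jacobi, th2_eq_jacobi, th4_eq_jacobi]
  have h := jacobiTheta₂_mul (x / Real.pi + 1 / 2 + τ / 2) (y / Real.pi + τ / 2) hτ
  rw [show x / (Real.pi : ℂ) + 1 / 2 + τ / 2 + (y / Real.pi + τ / 2) + τ =
      ((x + y) / Real.pi + 1 / 2) + 2 * τ by ring, jacobiTheta₂_add_left',
    show x / (Real.pi : ℂ) + 1 / 2 + τ / 2 - (y / Real.pi + τ / 2) + τ =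
      (x - y) / Real.pi + 1 / 2 + 2 * τ / 2 by ring,
    show x / (Real.pi : ℂ) + 1 / 2 + τ / 2 - (y / Real.pi + τ / 2) =
      (x - y) / Real.pi + 1 / 2 by ring,
    show x / (Real.pi : ℂ) + 1 / 2 + τ / 2 + (y / Real.pi + τ / 2) =
      (x + y) / Real.pi + 1 / 2 + 2 * τ / 2 by ring] at h
  have e1 : exp (Real.pi * I * τ / 4 + I * x) * exp (Real.pi * I * τ / 4 + I * y) =
      exp (Real.pi * I * (2 * τ) / 4 + I * (x + y)) := by
    rw [← exp_add]
    congr 1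
    ring
  have e2 : exp (Real.pi * I * (2 * τ) / 4 + I * (x + y)) *
      (exp (Real.pi * I * (2 * (x / Real.pi + 1 / 2 + τ / 2) + τ)) *
      exp (-Real.pi * I * (2 * τ + 2 * ((x + y) / Real.pi + 1 / 2)))) =
      exp (Real.pi * I * (2 * τ) / 4 + I * (x - y)) := by
    rw [← exp_add, ← exp_add]
    congr 1
    field_simp
    ring
  linear_combination (-I * exp (Real.pi * I * τ / 4 + I * x) *
    exp (Real.pi * I * τ / 4 + I * y)) * h - I * (jacobiTheta₂ ((x + y) / Real.pi + 1 / 2 +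
    2 * τ / 2) (2 * τ) * jacobiTheta₂ ((x - y) / Real.pi + 1 / 2) (2 * τ) +
    exp (Real.pi * I * (2 * (x / Real.pi + 1 / 2 + τ / 2) + τ)) *
    (exp (-Real.pi * I * (2 * τ + 2 * ((x + y) / Real.pi + 1 / 2))) *
    jacobiTheta₂ ((x + y) / Real.pi + 1 / 2) (2 * τ) *
    jacobiTheta₂ ((x - y) / Real.pi + 1 / 2 + 2 * τ / 2) (2 * τ))) * e1 -
    I * jacobiTheta₂ ((x + y) / Real.pi + 1 / 2) (2 * τ) *
    jacobiTheta₂ ((x - y) / Real.pi + 1 / 2 + 2 * τ / 2) (2 * τ) * e2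

lemma th4_mul_th3 (x y : ℂ) {τ : ℂ} (hτ : 0 < τ.im) :
    th4 x τ * th3 y τ = th4 (x + y) (2 * τ) * th4 (x - y) (2 * τ) +
      th1 (x + y) (2 * τ) * th1 (x - y) (2 * τ) := by
  have hpi := pi_ne_zero'
  simp only [th1_eq_jacobi, th3_eq_jacobi, th4_eq_jacobi]
  have h := jacobiTheta₂_mul (x / Real.pi + 1 / 2) (y / Real.pi) hτ
  rw [show x / (Real.pi : ℂ) + 1 / 2 + y / Real.pi + τ =
      (x + y) / Real.pi + 1 / 2 + 2 * τ / 2 by ring,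
    show x / (Real.pi : ℂ) + 1 / 2 - y / Real.pi + τ =
      (x - y) / Real.pi + 1 / 2 + 2 * τ / 2 by ring,
    show x / (Real.pi : ℂ) + 1 / 2 - y / Real.pi = (x - y) / Real.pi + 1 / 2 by ring,
    show x / (Real.pi : ℂ) + 1 / 2 + y / Real.pi = (x + y) / Real.pi + 1 / 2 by ring] at h
  have e : exp (Real.pi * I * (2 * (x / Real.pi + 1 / 2) + τ)) =
      -(exp (Real.pi * I * (2 * τ) / 4 + I * (x + y)) *
        exp (Real.pi * I * (2 * τ) / 4 + I * (x - y))) := by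
    rw [← exp_add, ← neg_one_mul (exp (_ + _)), ← exp_pi_mul_I, ← exp_add]
    congr 1
    field_simp
    ring
  rw [h, e]
  linear_combination -(exp (Real.pi * I * (2 * τ) / 4 + I * (x + y)) *
        exp (Real.pi * I * (2 * τ) / 4 + I * (x - y))) *
    (jacobiTheta₂ ((x + y) / Real.pi + 1 / 2 + 2 * τ / 2) (2 * τ) *
      jacobiTheta₂ ((x - y) / Real.pi + 1 / 2 + 2 * τ / 2) (2 * τ)) * I_sq

lemma exists_of_jacobiTheta₂_eq_zero' {z τ : ℂ} (hτ : 0 < τ.im) (h : jacobiTheta₂ z τ = 0) :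
    ∃ m n : ℤ, 2 * z = (2 * m + 1) + (2 * n + 1) * τ := by
  have hpi := pi_ne_zero'
  obtain ⟨n, hn⟩ := exists_of_jacobiTheta₂_eq_zero hτ h
  obtain ⟨k, hk⟩ := exp_eq_one_iff.mp hn
  refine ⟨k - 1, -n - 1, ?_⟩
  have h2 : (2 * n + 1) * τ + 2 * z + 1 = 2 * k := by
    apply mul_left_cancel₀ (mul_ne_zero hpi I_ne_zero)
    rw [hk]
    ring
  push_cast
  linear_combination h2

/-- Lattice coordinates with respect to `1, τ` are unique. -/
lemma re_im_eq_of_add_mul_eq {τ : ℂ} (hτ : 0 < τ.im) {a b c d : ℝ}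
    (h : (a : ℂ) + b * τ = c + d * τ) : a = c ∧ b = d := by
  have him := congrArg Complex.im h
  have hre := congrArg Complex.re h
  simp only [add_im, mul_im, ofReal_re, ofReal_im, zero_mul, add_zero, zero_add] at him
  have hb : b = d := mul_right_cancel₀ hτ.ne' him
  subst hb
  exact ⟨by simpa using hre, rfl⟩

lemma exists_of_th1_eq_zero {z τ : ℂ} (hτ : 0 < τ.im) (h : th1 z τ = 0) :
    ∃ m n : ℤ, z = Real.pi * (m + n * τ) := by
  have hpi := pi_ne_zero'
  rw [th1_eq_jacobi, mul_assoc] at h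
  have h' : jacobiTheta₂ (z / Real.pi + 1 / 2 + τ / 2) τ = 0 := by
    simpa [exp_ne_zero, I_ne_zero] using h
  obtain ⟨m, n, hmn⟩ := exists_of_jacobiTheta₂_eq_zero' hτ h'
  refine ⟨m, n, ?_⟩
  field_simp at hmn
  linear_combination hmn / 2

lemma th2_eq_th1 (z τ : ℂ) : th2 z τ = th1 (z + Real.pi / 2) τ := by
  have hpi := pi_ne_zero'
  rw [th2_eq_jacobi, th1_eq_jacobi, ← jacobiTheta₂_add_left (z / Real.pi + τ / 2),
    show (z + Real.pi / 2) / (Real.pi : ℂ) + 1 / 2 + τ / 2 = z / Real.pi + τ / 2 + 1 by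
      field_simp; ring,
    show Real.pi * I * τ / 4 + I * (z + Real.pi / 2) =
      Real.pi * I * τ / 4 + I * z + Real.pi / 2 * I by ring, exp_add _ (Real.pi / 2 * I),
    exp_pi_div_two_mul_I]
  linear_combination (exp (Real.pi * I * τ / 4 + I * z) *
    jacobiTheta₂ (z / Real.pi + τ / 2 + 1) τ) * I_sq

lemma exists_of_th3_eq_zero {z τ : ℂ} (hτ : 0 < τ.im) (h : th3 z τ = 0) :
    ∃ m n : ℤ, 2 * z / Real.pi = (2 * m + 1) + (2 * n + 1) * τ := by
  rw [th3_eq_jacobi] at h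
  obtain ⟨m, n, hmn⟩ := exists_of_jacobiTheta₂_eq_zero' hτ h
  exact ⟨m, n, by rw [← hmn]; ring⟩

lemma exists_of_th4_eq_zero {z τ : ℂ} (hτ : 0 < τ.im) (h : th4 z τ = 0) :
    ∃ m n : ℤ, 2 * z / Real.pi = 2 * m + (2 * n + 1) * τ := by
  rw [th4_eq_jacobi] at h
  obtain ⟨m, n, hmn⟩ := exists_of_jacobiTheta₂_eq_zero' hτ h
  exact ⟨m, n, by linear_combination hmn⟩

lemma th3_ofReal_ne_zero (t : ℝ) {τ : ℂ} (hτ : 0 < τ.im) : th3 t τ ≠ 0 := by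
  intro h
  obtain ⟨m, n, hmn⟩ := exists_of_th3_eq_zero hτ h
  have := (re_im_eq_of_add_mul_eq hτ (a := 2 * t / Real.pi) (b := 0) (c := 2 * m + 1)
    (d := 2 * n + 1) (by push_cast; rw [hmn]; ring)).2
  have h2 : (0 : ℤ) = 2 * n + 1 := by exact_mod_cast this
  omega

lemma th4_ofReal_ne_zero (t : ℝ) {τ : ℂ} (hτ : 0 < τ.im) : th4 t τ ≠ 0 := by
  intro h
  obtain ⟨m, n, hmn⟩ := exists_of_th4_eq_zero hτ h
  have := (re_im_eq_of_add_mul_eq hτ (a := 2 * t / Real.pi) (b := 0) (c := 2 * m)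
    (d := 2 * n + 1) (by push_cast; rw [hmn]; ring)).2
  have h2 : (0 : ℤ) = 2 * n + 1 := by exact_mod_cast this
  omega

lemma th3_ne_zero_or_th4_ne_zero (z : ℂ) {τ : ℂ} (hτ : 0 < τ.im) : th3 z τ ≠ 0 ∨ th4 z τ ≠ 0 := by
  by_contra! h
  obtain ⟨m, n, h3⟩ := exists_of_th3_eq_zero hτ h.1
  obtain ⟨m', n', h4⟩ := exists_of_th4_eq_zero hτ h.2
  have := (re_im_eq_of_add_mul_eq hτ (a := 2 * m + 1) (b := 2 * n + 1) (c := 2 * m')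
    (d := 2 * n' + 1) (by push_cast; rw [← h3, ← h4])).1
  have h2 : (2 * m + 1 : ℤ) = 2 * m' := by exact_mod_cast this
  omega

/-- `θ₁` has no zero at `π c` for non-integer real `c`. -/
lemma th1_pi_mul_ne_zero {c : ℝ} (hc : ∀ m : ℤ, c ≠ m) {τ : ℂ} (hτ : 0 < τ.im) :
    th1 (Real.pi * c) τ ≠ 0 := by
  intro h
  obtain ⟨m, n, hmn⟩ := exists_of_th1_eq_zero hτ h
  exact hc m (re_im_eq_of_add_mul_eq hτ (a := c) (b := 0) (c := m) (d := n)
    (by have := mul_left_cancel₀ pi_ne_zero' hmn; push_cast; rw [this]; ring)).1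

lemma rv_eq_mul_th1 (u : ℂ) {τ : ℂ} (hτ : 0 < τ.im) :
    rv τ u = th4 (2 * ηc) (2 * τ) * th2 ηc τ * th1 (u + ηc) τ := by
  have h := th1_mul_th2 (u + ηc) ηc hτ
  rw [show u + ηc + ηc = u + 2 * ηc by ring, show u + ηc - ηc = u by ring] at h
  rw [rv, av, bv]
  linear_combination -th4 (2 * ηc) (2 * τ) * h

lemma two_mul_im_pos {τ : ℂ} (hτ : 0 < τ.im) : 0 < (2 * τ).im := by simpa using hτ

lemma rv_const_ne_zero {τ : ℂ} (hτ : 0 < τ.im) : th4 (2 * ηc) (2 * τ) * th2 ηc τ ≠ 0 := by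
  refine mul_ne_zero ?_ ?_
  · have := th4_ofReal_ne_zero (2 * (Real.pi / 3)) (two_mul_im_pos hτ)
    simpa [ηc] using this
  · rw [th2_eq_th1]
    have := th1_pi_mul_ne_zero (c := 5 / 6) (fun m h => by
      have h2 : (5 : ℝ) = 6 * m := by linarith
      have h3 : (5 : ℤ) = 6 * m := by exact_mod_cast h2
      omega) hτ
    convert this using 2
    rw [ηc]
    push_cast
    ring

lemma rv_neg_ne_zero_of_rv_eq_zero {u τ : ℂ} (hτ : 0 < τ.im) (h : rv τ u = 0) : rv τ (-u) ≠ 0 := by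
  intro h'
  rw [rv_eq_mul_th1 _ hτ, mul_eq_zero, or_iff_right (rv_const_ne_zero hτ)] at h h'
  obtain ⟨m, n, h1⟩ := exists_of_th1_eq_zero hτ h
  obtain ⟨m', n', h2⟩ := exists_of_th1_eq_zero hτ h'
  have h3 : (2 / 3 : ℂ) = (m + m') + (n + n') * τ := by
    apply mul_left_cancel₀ pi_ne_zero'
    rw [ηc] at h1 h2
    linear_combination h1 + h2
  have h4 := (re_im_eq_of_add_mul_eq hτ (a := 2 / 3) (b := 0) (c := m + m') (d := n + n')
    (by push_cast; rw [h3]; ring)).1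
  have h5 : (2 : ℝ) = 3 * (m + m') := by linarith
  have h6 : (2 : ℤ) = 3 * (m + m') := by exact_mod_cast h5
  omega

lemma two_mul_th1_mul_th1 (x y : ℂ) {τ : ℂ} (hτ : 0 < τ.im) :
    2 * (th1 (x + y) (2 * τ) * th1 (x - y) (2 * τ)) =
      th4 x τ * th3 y τ - th4 y τ * th3 x τ := by
  rw [th4_mul_th3 x y hτ, th4_mul_th3 y x hτ, ← neg_sub x y, th4_neg, th1_neg, add_comm y x]
  ring

/-- The zeros of `θ₁` are simple. -/
lemma deriv_th1_ne_zero {z τ : ℂ} (hτ : 0 < τ.im) (hz : th1 z τ = 0) :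
    deriv (fun w => th1 w τ) z ≠ 0 := by
  intro hd
  obtain ⟨σ, rfl⟩ : ∃ σ, τ = 2 * σ := ⟨τ / 2, by ring⟩
  have hσ : 0 < σ.im := by simpa using hτ
  have d1 := differentiable_th1 hτ
  have d3 := differentiable_th3 hσ
  have d4 := differentiable_th4 hσ
  have wronskian (a : ℂ) : deriv (fun w => th4 w σ) a * th3 a σ =
      th4 a σ * deriv (fun w => th3 w σ) a := by
    have e0 := two_mul_th1_mul_th1 a (z - a) hσ
    rw [add_sub_cancel, hz, zero_mul, mul_zero] at e0
    have h1 : HasDerivAt (fun w => th4 w σ * th3 (z - a) σ - th4 (z - a) σ * th3 w σ)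
        (deriv (fun w => th4 w σ) a * th3 (z - a) σ -
          th4 (z - a) σ * deriv (fun w => th3 w σ) a) a :=
      ((d4 a).hasDerivAt.mul_const _).sub ((d3 a).hasDerivAt.const_mul _)
    have hz1 : HasDerivAt (fun w => th1 (w + (z - a)) (2 * σ)) 0 a := by
      have := (d1 z).hasDerivAt
      rw [hd, show z = a + (z - a) by ring] at this
      simpa using this.comp_add_const a (z - a)
    have hz2 : DifferentiableAt ℂ (fun w => th1 (w - (z - a)) (2 * σ)) a :=
      (d1.comp (differentiable_id.sub_const _)) a
    have h2 := (hz1.mul hz2.hasDerivAt).const_mul 2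
    rw [add_sub_cancel, hz, zero_mul, zero_mul, add_zero, mul_zero] at h2
    have h3 : (fun w => 2 * (th1 (w + (z - a)) (2 * σ) * th1 (w - (z - a)) (2 * σ))) =
        fun w => th4 w σ * th3 (z - a) σ - th4 (z - a) σ * th3 w σ :=
      funext fun w => two_mul_th1_mul_th1 w (z - a) hσ
    have h4 := h1.unique (h3 ▸ h2)
    rcases th3_ne_zero_or_th4_ne_zero (z - a) hσ with hC | hC <;>
      apply mul_left_cancel₀ hC
    · linear_combination th3 a σ * h4 + deriv (fun w => th3 w σ) a * e0
    · linear_combination th4 a σ * h4 + deriv (fun w => th4 w σ) a * e0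
  have hquot (t : ℝ) : HasDerivAt (fun t : ℝ => th4 t σ / th3 t σ) 0 t := by
    have := (d4 t).hasDerivAt.comp_ofReal.fun_div (d3 t).hasDerivAt.comp_ofReal
      (th3_ofReal_ne_zero t hσ)
    rwa [wronskian, sub_self, zero_div] at this
  have hconst : th4 (Real.pi / 3 : ℝ) σ / th3 (Real.pi / 3 : ℝ) σ =
      th4 (0 : ℝ) σ / th3 (0 : ℝ) σ :=
    is_const_of_deriv_eq_zero (𝕜 := ℝ) (fun t => (hquot t).differentiableAt)
      (fun t => (hquot t).deriv) (Real.pi / 3) 0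
  rw [div_eq_div_iff (th3_ofReal_ne_zero _ hσ) (th3_ofReal_ne_zero _ hσ)] at hconst
  have h := two_mul_th1_mul_th1 ((Real.pi / 3 : ℝ) : ℂ) ((0 : ℝ) : ℂ) hσ
  rw [hconst, sub_self, ofReal_zero, add_zero, sub_zero] at h
  have h0 : th1 ((Real.pi / 3 : ℝ) : ℂ) (2 * σ) = 0 := by simpa using h
  refine th1_pi_mul_ne_zero (c := 1 / 3) (fun m hm => ?_) hτ ?_
  · have h2 : (1 : ℝ) = 3 * m := by linarith
    have h3 : (1 : ℤ) = 3 * m := by exact_mod_cast h2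
    omega
  · rw [← h0]
    congr 1
    push_cast
    ring

lemma rv_eq_fun {τ : ℂ} (hτ : 0 < τ.im) :
    rv τ = fun u => th4 (2 * ηc) (2 * τ) * th2 ηc τ * th1 (u + ηc) τ :=
  funext fun u => rv_eq_mul_th1 u hτ

lemma differentiable_rv {τ : ℂ} (hτ : 0 < τ.im) : Differentiable ℂ (rv τ) := by
  rw [rv_eq_fun hτ]
  exact ((differentiable_th1 hτ).comp (differentiable_id.add_const _)).const_mul _

lemma deriv_rv_ne_zero {u τ : ℂ} (hτ : 0 < τ.im) (h : rv τ u = 0) : deriv (rv τ) u ≠ 0 := by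
  rw [rv_eq_mul_th1 _ hτ, mul_eq_zero, or_iff_right (rv_const_ne_zero hτ)] at h
  rw [rv_eq_fun hτ, deriv_const_mul_field, deriv_comp_add_const (fun w => th1 w τ)]
  exact mul_ne_zero (rv_const_ne_zero hτ) (deriv_th1_ne_zero hτ h)

section LimitingExchange

open Matrix

variable {ι : Type*} [Fintype ι]

lemma hasDerivAt_dotProduct {v w : ℂ → ι → ℂ} {v' w' : ι → ℂ} {x : ℂ}
    (hv : ∀ i, HasDerivAt (fun t => v t i) (v' i) x)
    (hw : ∀ i, HasDerivAt (fun t => w t i) (w' i) x) :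
    HasDerivAt (fun t => v t ⬝ᵥ w t) (v' ⬝ᵥ w x + v x ⬝ᵥ w') x := by
  simp only [dotProduct, ← Finset.sum_add_distrib]
  exact HasDerivAt.fun_sum fun i _ => (hv i).fun_mul (hw i)

/-- If `v P = w Q`, `P F = ρ D` and `Q G = ρ A` along a curve, then `v D = w A` at a simple zero of
`ρ`, provided `F` and `G` agree there and are annihilated by the frozen operators. -/
lemma dotProduct_eq_of_simple_zero {v w F G D A : ℂ → ι → ℂ} {P Q : ℂ → Matrix ι ι ℂ} {ρ : ℂ → ℂ}
    {x : ℂ} (dv : ∀ i, DifferentiableAt ℂ (fun t => v t i) x)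
    (dw : ∀ i, DifferentiableAt ℂ (fun t => w t i) x)
    (dF : ∀ i, DifferentiableAt ℂ (fun t => F t i) x)
    (dG : ∀ i, DifferentiableAt ℂ (fun t => G t i) x)
    (dD : ∀ i, DifferentiableAt ℂ (fun t => D t i) x)
    (dA : ∀ i, DifferentiableAt ℂ (fun t => A t i) x)
    (dP : ∀ i j, DifferentiableAt ℂ (fun t => P t i j) x)
    (dQ : ∀ i j, DifferentiableAt ℂ (fun t => Q t i j) x)
    (dρ : DifferentiableAt ℂ ρ x)
    (hFG : F x = G x) (hvw : ∀ t, v t ᵥ* P t = w t ᵥ* Q t)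
    (hP : ∀ t, P t *ᵥ F t = ρ t • D t) (hQ : ∀ t, Q t *ᵥ G t = ρ t • A t)
    (hQF : ∀ t, Q x *ᵥ F t = 0) (hPG : ∀ t, P x *ᵥ G t = 0)
    (hρ : ρ x = 0) (hρ' : deriv ρ x ≠ 0) :
    v x ⬝ᵥ D x = w x ⬝ᵥ A x := by
  set v' : ι → ℂ := fun i => deriv (fun t => v t i) x
  set w' : ι → ℂ := fun i => deriv (fun t => w t i) x
  set F' : ι → ℂ := fun i => deriv (fun t => F t i) x
  set G' : ι → ℂ := fun i => deriv (fun t => G t i) x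
  set P' : Matrix ι ι ℂ := fun i j => deriv (fun t => P t i j) x
  set Q' : Matrix ι ι ℂ := fun i j => deriv (fun t => Q t i j) x
  have hconst (c : ι → ℂ) (i : ι) : HasDerivAt (fun _ : ℂ => c i) ((0 : ι → ℂ) i) x :=
    hasDerivAt_const x (c i)
  have e1 : v' ᵥ* P x + v x ᵥ* P' = w' ᵥ* Q x + w x ᵥ* Q' := by
    funext j
    have h1 := hasDerivAt_dotProduct (fun i => (dv i).hasDerivAt) fun i => (dP i j).hasDerivAt
    have h2 := hasDerivAt_dotProduct (fun i => (dw i).hasDerivAt) fun i => (dQ i j).hasDerivAt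
    exact h1.unique ((funext fun t => congrFun (hvw t) j :
      (fun t => v t ⬝ᵥ fun i => P t i j) = fun t => w t ⬝ᵥ fun i => Q t i j) ▸ h2)
  have e2 : P' *ᵥ F x + P x *ᵥ F' = deriv ρ x • D x := by
    funext i
    have h1 := hasDerivAt_dotProduct (fun j => (dP i j).hasDerivAt) fun j => (dF j).hasDerivAt
    have h2 := dρ.hasDerivAt.fun_mul (dD i).hasDerivAt
    rw [hρ, zero_mul, add_zero] at h2
    exact h1.unique ((funext fun t => congrFun (hP t) i :
      (fun t => (fun j => P t i j) ⬝ᵥ F t) = fun t => ρ t * D t i) ▸ h2)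
  have e3 : Q' *ᵥ G x + Q x *ᵥ G' = deriv ρ x • A x := by
    funext i
    have h1 := hasDerivAt_dotProduct (fun j => (dQ i j).hasDerivAt) fun j => (dG j).hasDerivAt
    have h2 := dρ.hasDerivAt.fun_mul (dA i).hasDerivAt
    rw [hρ, zero_mul, add_zero] at h2
    exact h1.unique ((funext fun t => congrFun (hQ t) i :
      (fun t => (fun j => Q t i j) ⬝ᵥ G t) = fun t => ρ t * A t i) ▸ h2)
  have e4 : Q x *ᵥ F' = 0 := by
    funext i
    have h1 := hasDerivAt_dotProduct (hconst (Q x i)) fun j => (dF j).hasDerivAt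
    rw [zero_dotProduct, zero_add] at h1
    exact h1.unique ((funext fun t => congrFun (hQF t) i :
      (fun t => Q x i ⬝ᵥ F t) = fun _ => 0) ▸ hasDerivAt_const x (0 : ℂ))
  have e5 : P x *ᵥ G' = 0 := by
    funext i
    have h1 := hasDerivAt_dotProduct (hconst (P x i)) fun j => (dG j).hasDerivAt
    rw [zero_dotProduct, zero_add] at h1
    exact h1.unique ((funext fun t => congrFun (hPG t) i :
      (fun t => P x i ⬝ᵥ G t) = fun _ => 0) ▸ hasDerivAt_const x (0 : ℂ))
  have hPx : P x *ᵥ F x = 0 := by rw [hP, hρ, zero_smul]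
  have hQx : Q x *ᵥ F x = 0 := hQF x
  have f1 := congrArg (· ⬝ᵥ F x) e1
  simp only [add_dotProduct, ← dotProduct_mulVec, hPx, hQx, dotProduct_zero, zero_add] at f1
  have f2 := congrArg (v x ⬝ᵥ ·) e2
  have f3 := congrArg (w x ⬝ᵥ ·) e3
  simp only [dotProduct_add, dotProduct_smul, smul_eq_mul] at f2 f3
  rw [dotProduct_mulVec _ (P x), hvw, ← dotProduct_mulVec, e4, dotProduct_zero, add_zero] at f2
  rw [dotProduct_mulVec _ (Q x), ← hvw, ← dotProduct_mulVec, e5, dotProduct_zero, add_zero,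
    ← hFG] at f3
  exact mul_left_cancel₀ hρ' (by rw [← f2, ← f3, f1])

end LimitingExchange

/-- Quadruples as functions on `Fin 4`. -/
def fourEquiv : Fin 2 × Fin 2 × Fin 2 × Fin 2 ≃ (Fin 4 → Fin 2) where
  toFun p := ![p.1, p.2.1, p.2.2.1, p.2.2.2]
  invFun f := (f 0, f 1, f 2, f 3)
  left_inv _ := rfl
  right_inv f := by
    funext i
    fin_cases i <;> rfl

lemma sum_fin_four (g : (Fin 4 → Fin 2) → ℂ) :
    ∑ s, g s = ∑ a, ∑ b, ∑ c, ∑ d, g ![a, b, c, d] := by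
  rw [← fourEquiv.sum_comp]
  simp only [Fintype.sum_prod_type]
  rfl

section Update

variable {X : Type*} (a b c d s : X)

lemma update_four_zero : Function.update ![a, b, c, d] 0 s = ![s, b, c, d] := by
  funext i; fin_cases i <;> rfl

lemma update_four_one : Function.update ![a, b, c, d] 1 s = ![a, s, c, d] := by
  funext i; fin_cases i <;> rfl

lemma update_four_two : Function.update ![a, b, c, d] 2 s = ![a, b, s, d] := by
  funext i; fin_cases i <;> rfl

lemma update_four_three : Function.update ![a, b, c, d] 3 s = ![a, b, c, s] := by
  funext i; fin_cases i <;> rfl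

end Update

section LocalAction

variable (τ u : ℂ) (ψ : (Fin 4 → Fin 2) → ℂ) (a b c d : Fin 2)

lemma sum_Rcheckent_zero_zero (f : Fin 2 → Fin 2 → ℂ) :
    ∑ s, ∑ t, Rcheckent τ u (0, 0) (s, t) * f s t = av τ u * f 0 0 + dv τ u * f 1 1 := by
  simp [Fin.sum_univ_two, Rcheckent, Rent]

lemma sum_Rcheckent_zero_one (f : Fin 2 → Fin 2 → ℂ) :
    ∑ s, ∑ t, Rcheckent τ u (0, 1) (s, t) * f s t = cv τ u * f 0 1 + bv τ u * f 1 0 := by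
  simp [Fin.sum_univ_two, Rcheckent, Rent]

lemma sum_Rcheckent_one_zero (f : Fin 2 → Fin 2 → ℂ) :
    ∑ s, ∑ t, Rcheckent τ u (1, 0) (s, t) * f s t = bv τ u * f 0 1 + cv τ u * f 1 0 := by
  simp [Fin.sum_univ_two, Rcheckent, Rent]

lemma sum_Rcheckent_one_one (f : Fin 2 → Fin 2 → ℂ) :
    ∑ s, ∑ t, Rcheckent τ u (1, 1) (s, t) * f s t = dv τ u * f 0 0 + av τ u * f 1 1 := by
  simp [Fin.sum_univ_two, Rcheckent, Rent]

lemma applyRc_four_zero : applyRc τ u 0 1 ψ ![a, b, c, d] =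
    ∑ s, ∑ t, Rcheckent τ u (a, b) (s, t) * ψ ![s, t, c, d] := by
  simp only [applyRc, update_four_zero, update_four_one]
  rfl

lemma applyRc_four_one : applyRc τ u 1 2 ψ ![a, b, c, d] =
    ∑ s, ∑ t, Rcheckent τ u (b, c) (s, t) * ψ ![a, s, t, d] := by
  simp only [applyRc, update_four_one, update_four_two]
  rfl

lemma applyRc_four_two : applyRc τ u 2 3 ψ ![a, b, c, d] =
    ∑ s, ∑ t, Rcheckent τ u (c, d) (s, t) * ψ ![a, b, s, t] := by
  simp only [applyRc, update_four_two, update_four_three]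
  rfl

end LocalAction

/-- The boundary exchange relation for a boundary covector `χ`. -/
def BoundaryExchange (τ : ℂ) (χ : ℂ → Fin 2 → Fin 2 → ℂ) : Prop :=
  ∀ (x y : ℂ) (ψ : (Fin 4 → Fin 2) → ℂ),
    ∑ s, χ y (s 0) (s 1) * χ x (s 2) (s 3) *
        applyRc τ (-x - y) 1 2 (applyRc τ (y - x) 0 1 ψ) s =
      ∑ s, χ x (s 0) (s 1) * χ y (s 2) (s 3) *
        applyRc τ (-x - y) 1 2 (applyRc τ (y - x) 2 3 ψ) s

lemma boundaryExchange_of_antidiagonal {τ : ℂ} {χ : ℂ → Fin 2 → Fin 2 → ℂ}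
    (h00 : ∀ x, χ x 0 0 = 0) (h11 : ∀ x, χ x 1 1 = 0)
    (hac : ∀ x y, av τ (-x - y) * cv τ (y - x) * (χ x 0 1 * χ y 1 0 - χ x 1 0 * χ y 0 1) +
      cv τ (-x - y) * bv τ (y - x) * (χ x 0 1 * χ y 0 1 - χ x 1 0 * χ y 1 0) = 0)
    (hda : ∀ x y, dv τ (-x - y) * av τ (y - x) * (χ x 0 1 * χ y 1 0 - χ x 1 0 * χ y 0 1) +
      bv τ (-x - y) * dv τ (y - x) * (χ x 0 1 * χ y 0 1 - χ x 1 0 * χ y 1 0) = 0) :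
    BoundaryExchange τ χ := by
  intro x y ψ
  rw [sum_fin_four, sum_fin_four]
  simp only [Fin.sum_univ_two, Matrix.cons_val, h00, h11, zero_mul, mul_zero, add_zero, zero_add]
  simp only [applyRc_four_zero, applyRc_four_one, applyRc_four_two, sum_Rcheckent_zero_zero,
    sum_Rcheckent_zero_one, sum_Rcheckent_one_zero, sum_Rcheckent_one_one]
  linear_combination (ψ ![1, 0, 0, 1] - ψ ![0, 1, 1, 0]) * hac x y +
    (ψ ![1, 1, 1, 1] - ψ ![0, 0, 0, 0]) * hda x y

lemma boundaryExchange_of_diagonal {τ : ℂ} {χ : ℂ → Fin 2 → Fin 2 → ℂ}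
    (h01 : ∀ x, χ x 0 1 = 0) (h10 : ∀ x, χ x 1 0 = 0)
    (had : ∀ x y, av τ (-x - y) * dv τ (y - x) * (χ x 0 0 * χ y 0 0 - χ x 1 1 * χ y 1 1) +
      cv τ (-x - y) * av τ (y - x) * (χ x 0 0 * χ y 1 1 - χ x 1 1 * χ y 0 0) = 0)
    (hdb : ∀ x y, dv τ (-x - y) * bv τ (y - x) * (χ x 0 0 * χ y 0 0 - χ x 1 1 * χ y 1 1) +
      bv τ (-x - y) * cv τ (y - x) * (χ x 0 0 * χ y 1 1 - χ x 1 1 * χ y 0 0) = 0) :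
    BoundaryExchange τ χ := by
  intro x y ψ
  rw [sum_fin_four, sum_fin_four]
  simp only [Fin.sum_univ_two, Matrix.cons_val, h01, h10, zero_mul, mul_zero, add_zero, zero_add]
  simp only [applyRc_four_zero, applyRc_four_one, applyRc_four_two, sum_Rcheckent_zero_zero,
    sum_Rcheckent_zero_one, sum_Rcheckent_one_zero, sum_Rcheckent_one_one]
  linear_combination (ψ ![1, 1, 0, 0] - ψ ![0, 0, 1, 1]) * had x y +
    (ψ ![1, 0, 1, 0] - ψ ![0, 1, 0, 1]) * hdb x y

lemma th1_mul_th2' (x y : ℂ) {τ : ℂ} (hτ : 0 < τ.im) :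
    th1 y τ * th2 x τ = th1 (x + y) (2 * τ) * th4 (x - y) (2 * τ) -
      th4 (x + y) (2 * τ) * th1 (x - y) (2 * τ) := by
  rw [th1_mul_th2 y x hτ, ← neg_sub x y, th4_neg, th1_neg, add_comm y x]
  ring

lemma th4_mul_th3' (x y : ℂ) {τ : ℂ} (hτ : 0 < τ.im) :
    th4 y τ * th3 x τ = th4 (x + y) (2 * τ) * th4 (x - y) (2 * τ) -
      th1 (x + y) (2 * τ) * th1 (x - y) (2 * τ) := by
  rw [th4_mul_th3 y x hτ, ← neg_sub x y, th4_neg, th1_neg, add_comm y x]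
  ring

section ReflectedArguments

variable (τ x y : ℂ)

lemma th1_neg_sub_add : th1 (-x - y + 2 * ηc) (2 * τ) = -th1 (x + y - 2 * ηc) (2 * τ) := by
  rw [← th1_neg]; congr 1; ring

lemma th4_neg_sub_add : th4 (-x - y + 2 * ηc) (2 * τ) = th4 (x + y - 2 * ηc) (2 * τ) := by
  rw [← th4_neg]; congr 1; ring

lemma th1_sub_comm : th1 (y - x) (2 * τ) = -th1 (x - y) (2 * τ) := by
  rw [← th1_neg]; congr 1; ring

lemma th4_sub_comm : th4 (y - x) (2 * τ) = th4 (x - y) (2 * τ) := by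
  rw [← th4_neg]; congr 1; ring

end ReflectedArguments

lemma boundaryExchange_chiC (lam : ℂ) {τ : ℂ} (hτ : 0 < τ.im) :
    BoundaryExchange τ (chiC τ lam) := by
  have h01 (x : ℂ) : 2 * chiC τ lam x 0 1 =
      th1 (x - ηc) τ * th2 (lam + ηc) τ + th1 (lam + ηc) τ * th2 (x - ηc) τ := by
    rw [th1_mul_th2 _ _ hτ, th1_mul_th2' _ _ hτ,
      show x - ηc + (lam + ηc) = x + lam by ring, show x - ηc - (lam + ηc) = x - lam - 2 * ηc by ring]
    simp only [chiC, true_and, if_true]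
    ring
  have h10 (x : ℂ) : 2 * chiC τ lam x 1 0 =
      th1 (x - ηc) τ * th2 (lam + ηc) τ - th1 (lam + ηc) τ * th2 (x - ηc) τ := by
    rw [th1_mul_th2 _ _ hτ, th1_mul_th2' _ _ hτ,
      show x - ηc + (lam + ηc) = x + lam by ring, show x - ηc - (lam + ηc) = x - lam - 2 * ηc by ring]
    simp [chiC]
    ring
  have hs (x y : ℂ) : chiC τ lam x 0 1 * chiC τ lam y 0 1 - chiC τ lam x 1 0 * chiC τ lam y 1 0 =
      th1 (lam + ηc) τ * th2 (lam + ηc) τ *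
        (th1 (x + y - 2 * ηc) (2 * τ) * th4 (x - y) (2 * τ)) := by
    have e1 := th1_mul_th2 (x - ηc) (y - ηc) hτ
    have e2 := th1_mul_th2' (x - ηc) (y - ηc) hτ
    rw [show x - ηc + (y - ηc) = x + y - 2 * ηc by ring, sub_sub_sub_cancel_right] at e1 e2
    linear_combination (1 / 2 : ℂ) * chiC τ lam y 0 1 * h01 x + (1 / 4 : ℂ) *
      (th1 (x - ηc) τ * th2 (lam + ηc) τ + th1 (lam + ηc) τ * th2 (x - ηc) τ) * h01 y -
      (1 / 2 : ℂ) * chiC τ lam y 1 0 * h10 x - (1 / 4 : ℂ) *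
      (th1 (x - ηc) τ * th2 (lam + ηc) τ - th1 (lam + ηc) τ * th2 (x - ηc) τ) * h10 y +
      (1 / 2 : ℂ) * th1 (lam + ηc) τ * th2 (lam + ηc) τ * (e1 + e2)
  have hd (x y : ℂ) : chiC τ lam x 0 1 * chiC τ lam y 1 0 - chiC τ lam x 1 0 * chiC τ lam y 0 1 =
      -(th1 (lam + ηc) τ * th2 (lam + ηc) τ *
        (th4 (x + y - 2 * ηc) (2 * τ) * th1 (x - y) (2 * τ))) := by
    have e1 := th1_mul_th2 (x - ηc) (y - ηc) hτ
    have e2 := th1_mul_th2' (x - ηc) (y - ηc) hτ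
    rw [show x - ηc + (y - ηc) = x + y - 2 * ηc by ring, sub_sub_sub_cancel_right] at e1 e2
    linear_combination (1 / 2 : ℂ) * chiC τ lam y 1 0 * h01 x + (1 / 4 : ℂ) *
      (th1 (x - ηc) τ * th2 (lam + ηc) τ + th1 (lam + ηc) τ * th2 (x - ηc) τ) * h10 y -
      (1 / 2 : ℂ) * chiC τ lam y 0 1 * h10 x - (1 / 4 : ℂ) *
      (th1 (x - ηc) τ * th2 (lam + ηc) τ - th1 (lam + ηc) τ * th2 (x - ηc) τ) * h01 y +
      (1 / 2 : ℂ) * th1 (lam + ηc) τ * th2 (lam + ηc) τ * (e2 - e1)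
  refine boundaryExchange_of_antidiagonal (by simp [chiC]) (by simp [chiC]) (fun x y => ?_)
    (fun x y => ?_) <;>
  · rw [hs, hd]
    simp only [av, bv, cv, dv, th1_neg_sub_add, th4_neg_sub_add, th1_sub_comm τ x y,
      th4_sub_comm τ x y]
    ring

lemma boundaryExchange_chibarC (lam : ℂ) {τ : ℂ} (hτ : 0 < τ.im) :
    BoundaryExchange τ (chibarC τ lam) := by
  have h00 (x : ℂ) : 2 * chibarC τ lam x 0 0 =
      th4 (x - ηc) τ * th3 (lam + ηc) τ - th4 (lam + ηc) τ * th3 (x - ηc) τ := by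
    rw [th4_mul_th3 _ _ hτ, th4_mul_th3' _ _ hτ,
      show x - ηc + (lam + ηc) = x + lam by ring, show x - ηc - (lam + ηc) = x - lam - 2 * ηc by ring]
    simp only [chibarC, true_and, if_true]
    ring
  have h11 (x : ℂ) : 2 * chibarC τ lam x 1 1 =
      th4 (x - ηc) τ * th3 (lam + ηc) τ + th4 (lam + ηc) τ * th3 (x - ηc) τ := by
    rw [th4_mul_th3 _ _ hτ, th4_mul_th3' _ _ hτ,
      show x - ηc + (lam + ηc) = x + lam by ring, show x - ηc - (lam + ηc) = x - lam - 2 * ηc by ring]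
    simp [chibarC]
    ring
  have hs (x y : ℂ) :
      chibarC τ lam x 0 0 * chibarC τ lam y 0 0 - chibarC τ lam x 1 1 * chibarC τ lam y 1 1 =
      -(th4 (lam + ηc) τ * th3 (lam + ηc) τ *
        (th4 (x + y - 2 * ηc) (2 * τ) * th4 (x - y) (2 * τ))) := by
    have e1 := th4_mul_th3 (x - ηc) (y - ηc) hτ
    have e2 := th4_mul_th3' (x - ηc) (y - ηc) hτ
    rw [show x - ηc + (y - ηc) = x + y - 2 * ηc by ring, sub_sub_sub_cancel_right] at e1 e2
    linear_combination (1 / 2 : ℂ) * chibarC τ lam y 0 0 * h00 x + (1 / 4 : ℂ) *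
      (th4 (x - ηc) τ * th3 (lam + ηc) τ - th4 (lam + ηc) τ * th3 (x - ηc) τ) * h00 y -
      (1 / 2 : ℂ) * chibarC τ lam y 1 1 * h11 x - (1 / 4 : ℂ) *
      (th4 (x - ηc) τ * th3 (lam + ηc) τ + th4 (lam + ηc) τ * th3 (x - ηc) τ) * h11 y -
      (1 / 2 : ℂ) * th4 (lam + ηc) τ * th3 (lam + ηc) τ * (e1 + e2)
  have hd (x y : ℂ) :
      chibarC τ lam x 0 0 * chibarC τ lam y 1 1 - chibarC τ lam x 1 1 * chibarC τ lam y 0 0 =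
      th4 (lam + ηc) τ * th3 (lam + ηc) τ *
        (th1 (x + y - 2 * ηc) (2 * τ) * th1 (x - y) (2 * τ)) := by
    have e1 := th4_mul_th3 (x - ηc) (y - ηc) hτ
    have e2 := th4_mul_th3' (x - ηc) (y - ηc) hτ
    rw [show x - ηc + (y - ηc) = x + y - 2 * ηc by ring, sub_sub_sub_cancel_right] at e1 e2
    linear_combination (1 / 2 : ℂ) * chibarC τ lam y 1 1 * h00 x + (1 / 4 : ℂ) *
      (th4 (x - ηc) τ * th3 (lam + ηc) τ - th4 (lam + ηc) τ * th3 (x - ηc) τ) * h11 y -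
      (1 / 2 : ℂ) * chibarC τ lam y 0 0 * h11 x - (1 / 4 : ℂ) *
      (th4 (x - ηc) τ * th3 (lam + ηc) τ + th4 (lam + ηc) τ * th3 (x - ηc) τ) * h00 y +
      (1 / 2 : ℂ) * th4 (lam + ηc) τ * th3 (lam + ηc) τ * (e1 - e2)
  refine boundaryExchange_of_diagonal (by simp [chibarC]) (by simp [chibarC]) (fun x y => ?_)
    (fun x y => ?_) <;>
  · rw [hs, hd]
    simp only [av, bv, cv, dv, th1_neg_sub_add, th4_neg_sub_add, th1_sub_comm τ x y,
      th4_sub_comm τ x y]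
    ring

lemma differentiable_Rcheckent {τ : ℂ} (hτ : 0 < τ.im) (p q : Fin 2 × Fin 2) :
    Differentiable ℂ fun u => Rcheckent τ u p q := by
  have d1 := differentiable_th1 (two_mul_im_pos hτ)
  have d4 := differentiable_th4 (two_mul_im_pos hτ)
  have d1' : Differentiable ℂ fun u => th1 (u + 2 * ηc) (2 * τ) :=
    d1.comp (differentiable_id.add_const _)
  have d4' : Differentiable ℂ fun u => th4 (u + 2 * ηc) (2 * τ) :=
    d4.comp (differentiable_id.add_const _)
  simp only [Rcheckent, Rent, av, bv, cv, dv]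
  split_ifs
  · exact (d1'.const_mul _).mul d4
  · exact (d4'.const_mul _).mul d1
  · exact (d4'.const_mul _).mul d4
  · exact (d1'.const_mul _).mul d1
  · exact differentiable_const _

/-- The matrix of `applyRc`. -/
def Rmat (τ u : ℂ) {L : ℕ} (i j : Fin L) : Matrix (Fin L → Fin 2) (Fin L → Fin 2) ℂ := fun α β =>
  ∑ s, ∑ t, Rcheckent τ u (α i, α j) (s, t) *
    (if Function.update (Function.update α i s) j t = β then 1 else 0)

section FourSites

open Matrix

lemma Rmat_mulVec (τ u : ℂ) {L : ℕ} (i j : Fin L) (ψ : (Fin L → Fin 2) → ℂ) :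
    Rmat τ u i j *ᵥ ψ = applyRc τ u i j ψ := by
  funext α
  simp only [mulVec, dotProduct, Rmat, applyRc, Finset.sum_mul]
  rw [Finset.sum_comm]
  refine Finset.sum_congr rfl fun s _ => ?_
  rw [Finset.sum_comm]
  refine Finset.sum_congr rfl fun t _ => ?_
  simp

lemma differentiable_Rmat {τ : ℂ} (hτ : 0 < τ.im) {L : ℕ} (i j : Fin L) (α β : Fin L → Fin 2) :
    Differentiable ℂ fun u => Rmat τ u i j α β :=
  Differentiable.fun_sum fun _ _ => Differentiable.fun_sum fun _ _ =>
    (differentiable_Rcheckent hτ _ _).mul_const _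

lemma differentiable_Rmat_mul_Rmat {τ : ℂ} (hτ : 0 < τ.im) {L : ℕ} (i j k l : Fin L) (y : ℂ)
    (α β : Fin L → Fin 2) :
    Differentiable ℂ fun t => (Rmat τ (-t - y) i j * Rmat τ (y - t) k l) α β := by
  simp only [mul_apply]
  exact Differentiable.fun_sum fun γ _ =>
    ((differentiable_Rmat hτ i j α γ).comp (differentiable_id.neg.sub_const y)).fun_mul
      ((differentiable_Rmat hτ k l γ β).comp (differentiable_id.const_sub y))

/-- A four-site family satisfying the exchange relations. -/
def ExchangeFour (τ : ℂ) (φ : (Fin 4 → ℂ) → (Fin 4 → Fin 2) → ℂ) : Prop :=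
  ∀ (u : Fin 4 → ℂ) (i j : Fin 4), (j : ℕ) = (i : ℕ) + 1 →
    applyRc τ (u j - u i) i j (φ u) = fun s => rv τ (u j - u i) * φ (fun l => u (Equiv.swap i j l)) s

variable {τ : ℂ} {φ : (Fin 4 → ℂ) → (Fin 4 → Fin 2) → ℂ}

lemma ExchangeFour.zero_one (h : ExchangeFour τ φ) (a b c d : ℂ) :
    Rmat τ (b - a) 0 1 *ᵥ φ ![a, b, c, d] = rv τ (b - a) • φ ![b, a, c, d] := by
  have h1 := h ![a, b, c, d] 0 1 rfl
  have h2 : (fun l => ![a, b, c, d] (Equiv.swap 0 1 l)) = ![b, a, c, d] := by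
    funext l; fin_cases l <;> rfl
  rw [h2] at h1
  rw [Rmat_mulVec]
  exact h1

lemma ExchangeFour.one_two (h : ExchangeFour τ φ) (a b c d : ℂ) :
    Rmat τ (c - b) 1 2 *ᵥ φ ![a, b, c, d] = rv τ (c - b) • φ ![a, c, b, d] := by
  have h1 := h ![a, b, c, d] 1 2 rfl
  have h2 : (fun l => ![a, b, c, d] (Equiv.swap 1 2 l)) = ![a, c, b, d] := by
    funext l; fin_cases l <;> rfl
  rw [h2] at h1
  rw [Rmat_mulVec]
  exact h1

lemma ExchangeFour.two_three (h : ExchangeFour τ φ) (a b c d : ℂ) :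
    Rmat τ (d - c) 2 3 *ᵥ φ ![a, b, c, d] = rv τ (d - c) • φ ![a, b, d, c] := by
  have h1 := h ![a, b, c, d] 2 3 rfl
  have h2 : (fun l => ![a, b, c, d] (Equiv.swap 2 3 l)) = ![a, b, d, c] := by
    funext l; fin_cases l <;> rfl
  rw [h2] at h1
  rw [Rmat_mulVec]
  exact h1

lemma ExchangeFour.left (h : ExchangeFour τ φ) (x y z : ℂ) :
    (Rmat τ (-x - y) 1 2 * Rmat τ (y - x) 0 1) *ᵥ φ ![x, y, -y, z] =
      (rv τ (y - x) * rv τ (-x - y)) • φ ![y, -y, x, z] := by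
  rw [← mulVec_mulVec, h.zero_one, mulVec_smul, show -x - y = -y - x by ring, h.one_two, smul_smul]

lemma ExchangeFour.right (h : ExchangeFour τ φ) (x y z : ℂ) :
    (Rmat τ (-x - y) 1 2 * Rmat τ (y - x) 2 3) *ᵥ φ ![z, y, -y, -x] =
      (rv τ (y - x) * rv τ (-x - y)) • φ ![z, -x, y, -y] := by
  rw [← mulVec_mulVec, show y - x = -x - -y by ring, h.two_three, mulVec_smul, h.one_two, smul_smul]

/-- The product covector `χ(x) ⊗ χ(y)`. -/
def tensorCov (χ : ℂ → Fin 2 → Fin 2 → ℂ) (x y : ℂ) (s : Fin 4 → Fin 2) : ℂ :=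
  χ x (s 0) (s 1) * χ y (s 2) (s 3)

lemma BoundaryExchange.vecMul_eq {χ : ℂ → Fin 2 → Fin 2 → ℂ} (hχ : BoundaryExchange τ χ)
    (x y : ℂ) :
    tensorCov χ y x ᵥ* (Rmat τ (-x - y) 1 2 * Rmat τ (y - x) 0 1) =
      tensorCov χ x y ᵥ* (Rmat τ (-x - y) 1 2 * Rmat τ (y - x) 2 3) := by
  refine dotProduct_eq _ _ fun ψ => ?_
  rw [← dotProduct_mulVec, ← dotProduct_mulVec, ← mulVec_mulVec, ← mulVec_mulVec]
  simp only [Rmat_mulVec]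
  exact hχ x y ψ

lemma tensorCov_dotProduct_of_ne_zero {χ : ℂ → Fin 2 → Fin 2 → ℂ} (hτ : 0 < τ.im)
    (hχ : BoundaryExchange τ χ) (hχd : ∀ s t, Differentiable ℂ fun x => χ x s t)
    (hφ : ExchangeFour τ φ)
    (hφd : ∀ u i s, Differentiable ℂ fun z => φ (Function.update u i z) s) {x y : ℂ}
    (hr : rv τ (y - x) ≠ 0) :
    tensorCov χ y x ⬝ᵥ φ ![y, -y, x, -x] = tensorCov χ x y ⬝ᵥ φ ![x, -x, y, -y] := by
  have d0 (b c d : ℂ) (s) : Differentiable ℂ fun t => φ ![t, b, c, d] s := by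
    simpa only [update_four_zero] using hφd ![0, b, c, d] 0 s
  have d1 (a c d : ℂ) (s) : Differentiable ℂ fun t => φ ![a, t, c, d] s := by
    simpa only [update_four_one] using hφd ![a, 0, c, d] 1 s
  have d2 (a b d : ℂ) (s) : Differentiable ℂ fun t => φ ![a, b, t, d] s := by
    simpa only [update_four_two] using hφd ![a, b, 0, d] 2 s
  have d3 (a b c : ℂ) (s) : Differentiable ℂ fun t => φ ![a, b, c, t] s := by
    simpa only [update_four_three] using hφd ![a, b, c, 0] 3 s
  have dneg : Differentiable ℂ fun t : ℂ => -t := differentiable_id.neg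
  have dr := differentiable_rv hτ
  have dr1 : Differentiable ℂ fun t => rv τ (y - t) := dr.comp (differentiable_id.const_sub y)
  have dr2 : Differentiable ℂ fun t => rv τ (-t - y) := dr.comp (dneg.sub_const y)
  have dP (i j k l : Fin 4) (s t) :
      DifferentiableAt ℂ (fun u => (Rmat τ (-u - y) i j * Rmat τ (y - u) k l) s t) x :=
    differentiable_Rmat_mul_Rmat hτ i j k l y s t x
  by_cases h0 : rv τ (-x - y) = 0
  · refine dotProduct_eq_of_simple_zero (x := x)
      (v := fun t => tensorCov χ y t) (w := fun t => tensorCov χ t y)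
      (F := fun t => φ ![t, y, -y, -x]) (G := fun t => φ ![x, y, -y, -t])
      (D := fun t => φ ![y, -y, t, -x]) (A := fun t => φ ![x, -t, y, -y])
      (P := fun t => Rmat τ (-t - y) 1 2 * Rmat τ (y - t) 0 1)
      (Q := fun t => Rmat τ (-t - y) 1 2 * Rmat τ (y - t) 2 3)
      (ρ := fun t => rv τ (y - t) * rv τ (-t - y))
      (fun s => (hχd _ _).const_mul _ x) (fun s => (hχd _ _).mul_const _ x)
      (fun s => d0 _ _ _ s x) (fun s => ((d3 x y (-y) s).comp dneg) x) (fun s => d2 _ _ _ s x)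
      (fun s => ((d1 x y (-y) s).comp dneg) x)
      (dP 1 2 0 1) (dP 1 2 2 3)
      ((dr1.fun_mul dr2) x) rfl (fun t => hχ.vecMul_eq t y) (fun t => hφ.left t y (-x))
      (fun t => hφ.right t y x) (fun t => ?_) (fun t => ?_) ?_ ?_
    · simp only [hφ.right x y t, h0, mul_zero, zero_smul]
    · simp only [hφ.left x y (-t), h0, mul_zero, zero_smul]
    · simp only [h0, mul_zero]
    · have h2 : HasDerivAt (fun t => rv τ (-t - y)) (-deriv (rv τ) (-x - y)) x := by
        have h3 := (dr (-x - y)).hasDerivAt.comp x ((hasDerivAt_neg x).sub_const y)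
        simpa [Function.comp_def] using h3
      rw [((dr1 x).hasDerivAt.fun_mul h2).deriv, h0, mul_zero, zero_add]
      exact mul_ne_zero hr (neg_ne_zero.mpr (deriv_rv_ne_zero hτ h0))
  · have h1 := congrArg (tensorCov χ y x ⬝ᵥ ·) (hφ.left x y (-x))
    have h2 := congrArg (tensorCov χ x y ⬝ᵥ ·) (hφ.right x y x)
    simp only [dotProduct_mulVec, hχ.vecMul_eq, dotProduct_smul, smul_eq_mul] at h1 h2
    exact mul_left_cancel₀ (mul_ne_zero hr h0) (h1.symm.trans h2)

/-- The contraction with the boundary covectors is symmetric. -/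
lemma tensorCov_dotProduct_comm {χ : ℂ → Fin 2 → Fin 2 → ℂ} (hτ : 0 < τ.im)
    (hχ : BoundaryExchange τ χ) (hχd : ∀ s t, Differentiable ℂ fun x => χ x s t)
    (hφ : ExchangeFour τ φ)
    (hφd : ∀ u i s, Differentiable ℂ fun z => φ (Function.update u i z) s) (x y : ℂ) :
    tensorCov χ y x ⬝ᵥ φ ![y, -y, x, -x] = tensorCov χ x y ⬝ᵥ φ ![x, -x, y, -y] := by
  by_cases hr : rv τ (y - x) = 0
  · have h := rv_neg_ne_zero_of_rv_eq_zero hτ hr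
    rw [neg_sub] at h
    exact (tensorCov_dotProduct_of_ne_zero hτ hχ hχd hφ hφd h).symm
  · exact tensorCov_dotProduct_of_ne_zero hτ hχ hχd hφ hφd hr

end FourSites

lemma differentiable_chiC (lam : ℂ) {τ : ℂ} (hτ : 0 < τ.im) (s t : Fin 2) :
    Differentiable ℂ fun x => chiC τ lam x s t := by
  have d1 := differentiable_th1 (two_mul_im_pos hτ)
  have d4 := differentiable_th4 (two_mul_im_pos hτ)
  have dp : Differentiable ℂ fun x : ℂ => x + lam := by fun_prop
  have dm : Differentiable ℂ fun x : ℂ => x - lam - 2 * ηc := by fun_prop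
  simp only [chiC]
  split_ifs
  · exact (d1.comp dp).mul (d4.comp dm)
  · exact (d1.comp dm).mul (d4.comp dp)
  · exact differentiable_const _

lemma differentiable_chibarC (lam : ℂ) {τ : ℂ} (hτ : 0 < τ.im) (s t : Fin 2) :
    Differentiable ℂ fun x => chibarC τ lam x s t := by
  have d1 := differentiable_th1 (two_mul_im_pos hτ)
  have d4 := differentiable_th4 (two_mul_im_pos hτ)
  have dp : Differentiable ℂ fun x : ℂ => x + lam := by fun_prop
  have dm : Differentiable ℂ fun x : ℂ => x - lam - 2 * ηc := by fun_prop
  simp only [chibarC]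
  split_ifs
  · exact (d1.comp dp).mul (d1.comp dm)
  · exact (d4.comp dm).mul (d4.comp dp)
  · exact differentiable_const _

section Extend

variable {ι κ X : Type*} {e : κ → ι}

lemma extend_extend_comp (he : e.Injective) (s : κ → X) (α : ι → X) :
    Function.extend e (α ∘ e) (Function.extend e s α) = α := by
  funext l
  by_cases h : ∃ i, e i = l
  · obtain ⟨i, rfl⟩ := h
    simp [he.extend_apply]
  · simp [Function.extend_apply' _ _ _ h]

lemma update_extend [DecidableEq ι] [DecidableEq κ] (he : e.Injective) (s : κ → X) (α : ι → X)
    (i : κ) (a : X) :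
    Function.update (Function.extend e s α) (e i) a =
      Function.extend e (Function.update s i a) α := by
  funext l
  by_cases h : ∃ j, e j = l
  · obtain ⟨j, rfl⟩ := h
    simp [he.extend_apply, Function.update_apply, he.eq_iff]
  · have hl : l ≠ e i := fun h' => h ⟨i, h'.symm⟩
    simp [Function.extend_apply' _ _ _ h, hl]

lemma extend_swap [DecidableEq ι] [DecidableEq κ] (he : e.Injective) (s : κ → X) (α : ι → X)
    (i j : κ) :
    (fun l => Function.extend e s α (Equiv.swap (e i) (e j) l)) =
      Function.extend e (fun l => s (Equiv.swap i j l)) α := by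
  funext l
  by_cases h : ∃ m, e m = l
  · obtain ⟨m, rfl⟩ := h
    rw [he.swap_apply, he.extend_apply, he.extend_apply]
  · have h' (m : κ) : l ≠ e m := fun h' => h ⟨m, h'.symm⟩
    rw [Equiv.swap_apply_of_ne_of_ne (h' i) (h' j), Function.extend_apply' _ _ _ h,
      Function.extend_apply' _ _ _ h]

/-- Two sums over configurations agree if the partial sums over a set of sites agree. -/
lemma sum_eq_of_sum_extend_eq [Fintype ι] [Fintype κ] [DecidableEq ι] [DecidableEq κ] [Fintype X]
    [Nonempty X] (he : e.Injective) {g g' : (ι → X) → ℂ}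
    (h : ∀ α, ∑ s, g (Function.extend e s α) = ∑ s, g' (Function.extend e s α)) :
    ∑ α, g α = ∑ α, g' α := by
  have key (f : (ι → X) → ℂ) :
      ∑ α, ∑ s, f (Function.extend e s α) = Fintype.card (κ → X) * ∑ α, f α := by
    let E : (ι → X) × (κ → X) → (ι → X) × (κ → X) := fun p => (Function.extend e p.2 p.1, p.1 ∘ e)
    have hE : Function.Involutive E := fun p =>
      Prod.ext (extend_extend_comp he p.2 p.1) (funext fun i => he.extend_apply _ _ i)
    rw [← Fintype.sum_prod_type' fun α s => f (Function.extend e s α),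
      Fintype.sum_equiv (hE.toPerm E) (fun p => f (Function.extend e p.2 p.1)) (fun p => f p.1)
        fun _ => rfl, Fintype.sum_prod_type, Finset.mul_sum]
    simp
  have hc : (Fintype.card (κ → X) : ℂ) ≠ 0 := Nat.cast_ne_zero.mpr Fintype.card_ne_zero
  refine mul_left_cancel₀ hc ?_
  rw [← key, ← key]
  exact Finset.sum_congr rfl fun α _ => h α

end Extend

/-- The sites `2k`, `2k+1`, `2k+2`, `2k+3`. -/
def blockSite {n : ℕ} {k : ℕ} (hk : k + 1 < n) (i : Fin 4) : Fin (2 * n + 1) :=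
  ⟨2 * k + i, by have := i.2; omega⟩

lemma blockSite_injective {n k : ℕ} (hk : k + 1 < n) : (blockSite hk).Injective := fun i j h => by
  simp only [blockSite, Fin.mk.injEq] at h
  exact Fin.ext (by omega)

lemma extend_blockSite_of_notMem {n k : ℕ} (hk : k + 1 < n) {X : Type*} (s : Fin 4 → X)
    (α : Fin (2 * n + 1) → X) {l : Fin (2 * n + 1)} (hl : (l : ℕ) < 2 * k ∨ 2 * k + 4 ≤ l) :
    Function.extend (blockSite hk) s α l = α l := by
  refine Function.extend_apply' _ _ _ ?_
  rintro ⟨i, rfl⟩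
  simp only [blockSite] at hl
  omega

/-- Freezing all sites outside a block yields a four-site family satisfying the exchange
relations. -/
lemma PsiP1.exchangeFour {τ : ℂ} {Ψ : PsiFam} (h : PsiP1 τ Ψ) {n k : ℕ} (hk : k + 1 < n)
    (U : Fin (2 * n + 1) → ℂ) (α : Fin (2 * n + 1) → Fin 2) :
    ExchangeFour τ fun u s =>
      Ψ n (Function.extend (blockSite hk) u U) (Function.extend (blockSite hk) s α) := by
  intro u i j hij
  have he := blockSite_injective hk
  funext s
  have h1 := congrFun (h n (Function.extend (blockSite hk) u U) (blockSite hk i) (blockSite hk j)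
    (by simp only [blockSite]; omega)) (Function.extend (blockSite hk) s α)
  rw [extend_swap he] at h1
  simpa only [applyRc, update_extend he, he.extend_apply] using h1

lemma PsiEntire.differentiable_extend {Ψ : PsiFam} (h : PsiEntire Ψ) {n k : ℕ} (hk : k + 1 < n)
    (U : Fin (2 * n + 1) → ℂ) (α : Fin (2 * n + 1) → Fin 2) (u : Fin 4 → ℂ) (i : Fin 4) :
    Differentiable ℂ fun z =>
      Ψ n (Function.extend (blockSite hk) (Function.update u i z) U) α := by
  simpa only [update_extend (blockSite_injective hk)] using
    h n (Function.extend (blockSite hk) u U) (blockSite hk i) α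

/-- The contraction of `Ψ n (x₁, -x₁, …, xₙ, -xₙ, 0)` with `χ(x₁) ⊗ ⋯ ⊗ χ(xₙ) ⊗ b`. -/
def contraction (χ : ℂ → Fin 2 → Fin 2 → ℂ) (b : Fin 2 → ℂ) (Ψ : PsiFam) (n : ℕ)
    (x : Fin n → ℂ) : ℂ :=
  ∑ α : Fin (2 * n + 1) → Fin 2,
    (∏ m : Fin n, χ (x m)
        (α ⟨2 * (m : ℕ), by have := m.2; omega⟩) (α ⟨2 * (m : ℕ) + 1, by have := m.2; omega⟩))
      * b (α ⟨2 * n, by omega⟩) * Ψ n (interleave x) α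

section Block

variable {n k : ℕ} (hk : k + 1 < n)

lemma interleave_eq_extend (x x' : Fin n → ℂ)
    (hx : ∀ m : Fin n, (m : ℕ) ≠ k → (m : ℕ) ≠ k + 1 → x' m = x m) :
    interleave x' = Function.extend (blockSite hk)
      ![x' ⟨k, by omega⟩, -x' ⟨k, by omega⟩, x' ⟨k + 1, hk⟩, -x' ⟨k + 1, hk⟩] (interleave x) := by
  funext l
  by_cases hl : (l : ℕ) < 2 * k ∨ 2 * k + 4 ≤ l
  · rw [extend_blockSite_of_notMem hk _ _ hl]
    unfold interleave
    split_ifs with h1 h2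
    · exact hx _ (by simp only; omega) (by simp only; omega)
    · rw [hx _ (by simp only; omega) (by simp only; omega)]
    · rfl
  · obtain ⟨i, rfl⟩ : ∃ i, blockSite hk i = l :=
      ⟨⟨l - 2 * k, by omega⟩, Fin.ext (by simp only [blockSite]; omega)⟩
    rw [(blockSite_injective hk).extend_apply]
    have e1 : (2 * k + 1) / 2 = k := by omega
    have e2 : (2 * k + 2) / 2 = k + 1 := by omega
    have e3 : (2 * k + 3) / 2 = k + 1 := by omega
    fin_cases i
    · simp [interleave, blockSite, show k < n by omega]
    · simp [interleave, blockSite, show 2 * k + 1 < 2 * n by omega, Nat.add_mod, e1]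
    · simp [interleave, blockSite, show 2 * k + 2 < 2 * n by omega, e2]
    · simp [interleave, blockSite, show 2 * k + 3 < 2 * n by omega, Nat.add_mod, e3]

lemma prod_extend_blockSite (χ : ℂ → Fin 2 → Fin 2 → ℂ) (x x' : Fin n → ℂ)
    (hx : ∀ m : Fin n, (m : ℕ) ≠ k → (m : ℕ) ≠ k + 1 → x' m = x m)
    (α : Fin (2 * n + 1) → Fin 2) (s : Fin 4 → Fin 2) :
    (∏ m : Fin n, χ (x' m)
        (Function.extend (blockSite hk) s α ⟨2 * (m : ℕ), by have := m.2; omega⟩)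
        (Function.extend (blockSite hk) s α ⟨2 * (m : ℕ) + 1, by have := m.2; omega⟩)) =
      tensorCov χ (x' ⟨k, by omega⟩) (x' ⟨k + 1, hk⟩) s *
        ∏ m ∈ (Finset.univ.erase (⟨k, by omega⟩ : Fin n)).erase ⟨k + 1, hk⟩, χ (x m)
          (α ⟨2 * (m : ℕ), by have := m.2; omega⟩)
          (α ⟨2 * (m : ℕ) + 1, by have := m.2; omega⟩) := by
  have he := blockSite_injective hk
  rw [← Finset.mul_prod_erase _ _ (Finset.mem_univ (⟨k, by omega⟩ : Fin n)),
    ← Finset.mul_prod_erase _ _ (a := (⟨k + 1, hk⟩ : Fin n)) (by simp), ← mul_assoc]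
  congr 1
  · have h0 := he.extend_apply s α 0
    have h1 := he.extend_apply s α 1
    have h2 := he.extend_apply s α 2
    have h3 := he.extend_apply s α 3
    rw [tensorCov, ← h0, ← h1, ← h2, ← h3]
    rfl
  · refine Finset.prod_congr rfl fun m hm => ?_
    simp only [Finset.mem_erase, Finset.mem_univ, ne_eq, Fin.ext_iff, and_true] at hm
    rw [hx m hm.2 hm.1, extend_blockSite_of_notMem hk _ _ (by simp only; omega),
      extend_blockSite_of_notMem hk _ _ (by simp only; omega)]

end Block

lemma contraction_adjacent_swap {τ : ℂ} (hτ : 0 < τ.im) {χ : ℂ → Fin 2 → Fin 2 → ℂ}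
    (hχ : BoundaryExchange τ χ) (hχd : ∀ s t, Differentiable ℂ fun x => χ x s t) (b : Fin 2 → ℂ)
    {Ψ : PsiFam} (hent : PsiEntire Ψ) (hP : PsiP1 τ Ψ) {n k : ℕ} (hk : k + 1 < n)
    (x : Fin n → ℂ) :
    contraction χ b Ψ n (fun i => x (Equiv.swap ⟨k, by omega⟩ ⟨k + 1, hk⟩ i)) =
      contraction χ b Ψ n x := by
  refine sum_eq_of_sum_extend_eq (blockSite_injective hk) fun α => ?_
  have key := tensorCov_dotProduct_comm hτ hχ hχd (hP.exchangeFour hk (interleave x) α)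
    (fun u i s => hent.differentiable_extend hk _ _ u i) (x ⟨k, by omega⟩) (x ⟨k + 1, hk⟩)
  have hx (m : Fin n) (h1 : (m : ℕ) ≠ k) (h2 : (m : ℕ) ≠ k + 1) :
      x (Equiv.swap ⟨k, by omega⟩ ⟨k + 1, hk⟩ m) = x m := by
    rw [Equiv.swap_apply_of_ne_of_ne] <;> simpa [Fin.ext_iff]
  have hlast (s : Fin 4 → Fin 2) :
      Function.extend (blockSite hk) s α ⟨2 * n, by omega⟩ = α ⟨2 * n, by omega⟩ :=
    extend_blockSite_of_notMem hk s α (Or.inr (by simp only; omega))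
  simp only [prod_extend_blockSite hk χ x _ hx, prod_extend_blockSite hk χ x x fun _ _ _ => rfl,
    hlast]
  rw [interleave_eq_extend hk x _ hx]
  conv_rhs => rw [interleave_eq_extend hk x x fun _ _ _ => rfl]
  simp only [Equiv.swap_apply_left, Equiv.swap_apply_right]
  generalize (∏ m ∈ _, _ : ℂ) = c
  have hc (a d : ℂ) : a * c * b (α ⟨2 * n, by omega⟩) * d =
      c * b (α ⟨2 * n, by omega⟩) * (a * d) := by ring
  simp only [hc, ← Finset.mul_sum]
  exact congrArg _ key

/-- The contraction is a symmetric function. -/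
lemma contraction_perm {τ : ℂ} (hτ : 0 < τ.im) {χ : ℂ → Fin 2 → Fin 2 → ℂ}
    (hχ : BoundaryExchange τ χ) (hχd : ∀ s t, Differentiable ℂ fun x => χ x s t) (b : Fin 2 → ℂ)
    {Ψ : PsiFam} (hent : PsiEntire Ψ) (hP : PsiP1 τ Ψ) {n : ℕ} (σ : Equiv.Perm (Fin n))
    (x : Fin n → ℂ) :
    contraction χ b Ψ n (fun i => x (σ i)) = contraction χ b Ψ n x := by
  cases n with
  | zero => exact congrArg _ (Subsingleton.elim _ _)
  | succ n =>
    have hσ : σ ∈ Submonoid.closure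
        (Set.range fun i : Fin n => Equiv.swap i.castSucc i.succ) := by
      rw [Equiv.Perm.mclosure_swap_castSucc_succ]
      trivial
    induction hσ using Submonoid.closure_induction generalizing x with
    | mem σ h =>
      obtain ⟨i, rfl⟩ := h
      exact contraction_adjacent_swap hτ hχ hχd b hent hP (k := i) (by omega) x
    | one => rfl
    | mul σ ρ _ _ h1 h2 => exact (h2 fun i => x (σ i)).trans (h1 x)

theorem stmt9 (τ lam : ℂ) (hτ : 0 < τ.im) (Ψ : PsiFam)
    (hent : PsiEntire Ψ) (h1 : PsiP1 τ Ψ)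
    (n : ℕ) (hn : 2 ≤ n) (x : Fin n → ℂ) (σ : Equiv.Perm (Fin n)) :
    Zfun τ lam Ψ n (fun i => x (σ i)) = Zfun τ lam Ψ n x ∧
    Zbarfun τ lam 1 Ψ n (fun i => x (σ i)) = Zbarfun τ lam 1 Ψ n x ∧
    Zbarfun τ lam (-1) Ψ n (fun i => x (σ i)) = Zbarfun τ lam (-1) Ψ n x :=
  ⟨contraction_perm hτ (boundaryExchange_chiC lam hτ) (differentiable_chiC lam hτ)
      (fun s => if s = 0 then 1 else 0) hent h1 σ x,
    contraction_perm hτ (boundaryExchange_chibarC lam hτ) (differentiable_chibarC lam hτ)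
      (fun s => if s = 0 then 1 else 1) hent h1 σ x,
    contraction_perm hτ (boundaryExchange_chibarC lam hτ) (differentiable_chibarC lam hτ)
      (fun s => if s = 0 then 1 else -1) hent h1 σ x⟩

end
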